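/- arXiv:1904.01925 — 5 statements merged into one kernel-verified Lean document; each statement's English description precedes it below -/
import Mathlib

section
/- Let a ∈ ℝ with a ≥ 1 and let n, s, t ∈ ℕ with 1 ≤ s ≤ t ≤ n. Assume a·s + t ≥ n, t ≥ a·s, and s + a·s ≤ t. Then the number M⁽ᵃ⁾(n,s,t) of monochromatic generalized Schur triples (x, y, x + ⌊ay⌋) on [n] under the block coloring R^s B^{t−s} R^{n−t} equals Σ_{y=1}^{⌊s/a⌋} Σ_{x=1}^{s−⌊ay⌋} 1 + Σ_{y=s+1}^{⌊(t−s)/a⌋} Σ_{x=s+1}^{t−⌊ay⌋} 1 + Σ_{y=1}^{⌊(n−t)/a⌋} Σ_{x=t+1}^{n−⌊ay⌋} 1 + Σ_{y=t+1}^{⌊n/a⌋} Σ_{x=1}^{n−⌊ay⌋} 1, where a sum whose lower bound exceeds its upper bound is zero. -/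
open Finset

/-- The number `M⁽ᵃ⁾(n,s,t)` of monochromatic generalized Schur triples
`(x, y, x + ⌊ay⌋)` in `[n]³` under the block coloring `R^s B^(t-s) R^(n-t)`:
pairs `(x,y) ∈ [n]²` such that `z = x + ⌊ay⌋ ≤ n` and `x, y, z` are all red
(`≤ s` or `> t`) or all blue (in `(s,t]`). -/
noncomputable def genCountR (a : ℝ) (n s t : ℕ) : ℕ := by
  classical
  exact ((Finset.Icc 1 n ×ˢ Finset.Icc 1 n).filter
    (fun p => ((p.1 : ℤ) + ⌊a * (p.2 : ℝ)⌋ ≤ (n : ℤ)) ∧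
      (((((p.1 : ℤ) ≤ (s : ℤ) ∨ (t : ℤ) < (p.1 : ℤ)) ∧
         ((p.2 : ℤ) ≤ (s : ℤ) ∨ (t : ℤ) < (p.2 : ℤ)) ∧
         ((p.1 : ℤ) + ⌊a * (p.2 : ℝ)⌋ ≤ (s : ℤ) ∨
           (t : ℤ) < (p.1 : ℤ) + ⌊a * (p.2 : ℝ)⌋))) ∨
       (((s : ℤ) < (p.1 : ℤ) ∧ (p.1 : ℤ) ≤ (t : ℤ)) ∧
        ((s : ℤ) < (p.2 : ℤ) ∧ (p.2 : ℤ) ≤ (t : ℤ)) ∧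
        ((s : ℤ) < (p.1 : ℤ) + ⌊a * (p.2 : ℝ)⌋ ∧
          (p.1 : ℤ) + ⌊a * (p.2 : ℝ)⌋ ≤ (t : ℤ)))))).card

/-! Each colour class of triples is a disjoint union of corners `{x > K, y > L, x + ⌊ay⌋ ≤ N}`.
Blue triples form the corner `K = L = s`, `N = t`, since `x` and `y` never exceed `z`. For a red
triple with `y ≤ s`, the bound `s + as ≤ t` prevents `z` from jumping over the blue block, so
either `z ≤ s` or `x > t`. If instead `y > t`, then `n ≤ as + t ≤ at + s` forces `x ≤ s`, so `x`
is automatically red; dually, `x > t` forces `y ≤ s`. -/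

/-- The pairs `(x, y)` with `K < x`, `L < y` and `x + ⌊ay⌋ ≤ N`, the building blocks of the
colour classes. The bounds `x ≤ N` and `y ≤ N` built into the box, there to make it finite, follow
from `x + ⌊ay⌋ ≤ N` when `1 ≤ a`; see `mem_schurPairs`. -/
noncomputable def schurPairs (a : ℝ) (K L N : ℕ) : Finset (ℕ × ℕ) :=
  {p ∈ Ioc K N ×ˢ Ioc L N | (p.1 : ℤ) + ⌊a * (p.2 : ℝ)⌋ ≤ N}

section Floor

variable {a : ℝ}

theorem natCast_le_floor_mul (ha : 1 ≤ a) (y : ℕ) : (y : ℤ) ≤ ⌊a * (y : ℝ)⌋ :=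
  Int.le_floor.mpr (by simpa using le_mul_of_one_le_left y.cast_nonneg ha)

theorem add_floor_mul_le {K L N y : ℕ} (ha : 0 ≤ a) (hN : (K : ℝ) + a * L ≤ N) (hy : y ≤ L) :
    (K : ℤ) + ⌊a * (y : ℝ)⌋ ≤ N := by
  have floor_le : (⌊a * (y : ℝ)⌋ : ℝ) ≤ a * L :=
    (Int.floor_le _).trans (by gcongr)
  exact_mod_cast (by linarith : (K : ℝ) + ⌊a * (y : ℝ)⌋ ≤ N)

theorem le_floor_mul_add {K L N y : ℕ} (ha : 0 ≤ a) (hN : (N : ℝ) ≤ a * L + K) (hy : L ≤ y) :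
    (N : ℤ) ≤ ⌊a * (y : ℝ)⌋ + K := by
  have mul_le : a * L ≤ a * (y : ℝ) := by gcongr
  rw [← sub_le_iff_le_add, Int.le_floor]
  push_cast
  linarith

theorem le_floor_sub_div {K N x y : ℕ} (ha : 0 < a) (hx : K < x)
    (hz : (x : ℤ) + ⌊a * (y : ℝ)⌋ ≤ N) : (y : ℤ) ≤ ⌊((N : ℝ) - K) / a⌋ := by
  have mul_lt : a * (y : ℝ) < ((N - K : ℤ) : ℝ) := Int.floor_lt.mp (by omega)
  rw [Int.le_floor, le_div_iff₀ ha]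
  push_cast at mul_lt ⊢
  linarith

end Floor

section SchurPairs

variable {a : ℝ} {K L N K' L' N' : ℕ}

theorem mem_schurPairs (ha : 1 ≤ a) {p : ℕ × ℕ} :
    p ∈ schurPairs a K L N ↔ K < p.1 ∧ L < p.2 ∧ (p.1 : ℤ) + ⌊a * (p.2 : ℝ)⌋ ≤ N := by
  have le_floor := natCast_le_floor_mul ha p.2
  simp only [schurPairs, mem_filter, mem_product, mem_Ioc]
  omega

theorem card_schurPairs (ha : 1 ≤ a) (K L N : ℕ) :
    #(schurPairs a K L N) =
      ∑ y ∈ Icc ((L : ℤ) + 1) ⌊((N : ℝ) - K) / a⌋,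
        #(Icc ((K : ℤ) + 1) ((N : ℤ) - ⌊a * (y : ℝ)⌋)) := by
  rw [← card_sigma]
  refine card_bij (fun p _ => ⟨(p.2 : ℤ), (p.1 : ℤ)⟩) ?maps_to ?injective ?surjective
  case maps_to =>
    intro p hp
    obtain ⟨hx, hy, hz⟩ := (mem_schurPairs ha).mp hp
    have y_le := le_floor_sub_div (by linarith) hx hz
    simp only [mem_sigma, mem_Icc, Int.cast_natCast]
    omega
  case injective =>
    rintro ⟨x, y⟩ _ ⟨x', y'⟩ _ h
    simpa [and_comm] using h
  case surjective =>
    rintro ⟨y, x⟩ h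
    simp only [mem_sigma, mem_Icc] at h
    lift y to ℕ using by omega
    lift x to ℕ using by omega
    rw [Int.cast_natCast] at h
    exact ⟨(x, y), (mem_schurPairs ha).mpr (by dsimp only; omega), rfl⟩

theorem disjoint_schurPairs_of_le_fst (h : N ≤ K') :
    Disjoint (schurPairs a K L N) (schurPairs a K' L' N') :=
  disjoint_filter_filter <| disjoint_product.mpr <| .inl <| Ioc_disjoint_Ioc_of_le h

theorem disjoint_schurPairs_of_le_snd (h : N ≤ L') :
    Disjoint (schurPairs a K L N) (schurPairs a K' L' N') :=
  disjoint_filter_filter <| disjoint_product.mpr <| .inr <| Ioc_disjoint_Ioc_of_le h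

theorem disjoint_schurPairs_of_le_mul_add (ha : 0 ≤ a) (h : (N : ℝ) ≤ a * L' + K) :
    Disjoint (schurPairs a K L N) (schurPairs a K' L' N') := by
  refine disjoint_left.mpr fun p hp hp' => ?_
  simp only [schurPairs, mem_filter, mem_product, mem_Ioc] at hp hp'
  have N_le := le_floor_mul_add ha h hp'.1.2.1.le
  omega

end SchurPairs

section Coloring

theorem blue_triple_iff {s t x y w : ℤ} (hx : 0 ≤ x) (hy : 0 ≤ y) (hyw : y ≤ w) :
    ((s < x ∧ x ≤ t) ∧ (s < y ∧ y ≤ t) ∧ (s < x + w ∧ x + w ≤ t)) ↔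
      s < x ∧ s < y ∧ x + w ≤ t := by
  omega

theorem red_triple_iff {n s t x y w : ℤ} (hx : 0 ≤ x) (hy : 0 ≤ y) (hyw : y ≤ w)
    (hst : s ≤ t) (htn : t ≤ n) (h_short : y ≤ s → s + w ≤ t) (h_mid : s ≤ y → n ≤ w + t)
    (h_long : t ≤ y → n ≤ w + s) :
    (x + w ≤ n ∧ (x ≤ s ∨ t < x) ∧ (y ≤ s ∨ t < y) ∧ (x + w ≤ s ∨ t < x + w)) ↔
      x + w ≤ s ∨ (t < x ∧ x + w ≤ n) ∨ (t < y ∧ x + w ≤ n) := by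
  constructor
  · rintro ⟨hz, x_red, y_red | y_red, z_red⟩
    · have := h_short y_red
      omega
    · exact .inr (.inr ⟨y_red, hz⟩)
  · rintro (hz | ⟨x_gt, hz⟩ | ⟨y_gt, hz⟩)
    · omega
    · have y_le : y ≤ s := by
        by_contra! y_gt
        have := h_mid y_gt.le
        omega
      omega
    · have x_le : x ≤ s := by
        have := h_long y_gt.le
        omega
      omega

variable {a : ℝ} {n s t : ℕ}

theorem genCountR_eq_card_union (ha : 1 ≤ a) (hst : s ≤ t) (htn : t ≤ n)
    (hn : (n : ℝ) ≤ a * s + t) (ht : (s : ℝ) + a * s ≤ t) :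
    genCountR a n s t =
      #(schurPairs a 0 0 s ∪ schurPairs a s s t ∪ schurPairs a t 0 n ∪ schurPairs a 0 t n) := by
  have hn' : (n : ℝ) ≤ a * t + s := by
    have : (s : ℝ) ≤ t := mod_cast hst
    nlinarith
  have ha₀ : 0 ≤ a := by linarith
  unfold genCountR
  congr 1
  ext ⟨x, y⟩
  have y_le_floor := natCast_le_floor_mul ha y
  have blue := blue_triple_iff (s := s) (t := t) x.cast_nonneg y.cast_nonneg y_le_floor
  have red := red_triple_iff (n := n) (s := s) (t := t) x.cast_nonneg y.cast_nonneg y_le_floor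
    (mod_cast hst) (mod_cast htn)
    (fun hy => add_floor_mul_le ha₀ ht (mod_cast hy))
    (fun hy => le_floor_mul_add ha₀ hn (mod_cast hy))
    (fun hy => le_floor_mul_add ha₀ hn' (mod_cast hy))
  simp only [mem_filter, mem_product, mem_Icc, mem_union, mem_schurPairs ha]
  rw [and_or_left, red, blue]
  omega

theorem card_union_schurPairs (ha : 0 ≤ a) (hst : s ≤ t) (hn : (n : ℝ) ≤ a * s + t) :
    #(schurPairs a 0 0 s ∪ schurPairs a s s t ∪ schurPairs a t 0 n ∪ schurPairs a 0 t n) =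
      #(schurPairs a 0 0 s) + #(schurPairs a s s t) + #(schurPairs a t 0 n) +
        #(schurPairs a 0 t n) := by
  have hn' : (n : ℝ) ≤ a * t + t := hn.trans (by gcongr)
  rw [card_union_of_disjoint, card_union_of_disjoint, card_union_of_disjoint]
  · exact disjoint_schurPairs_of_le_fst le_rfl
  · exact disjoint_union_left.mpr
      ⟨disjoint_schurPairs_of_le_fst hst, disjoint_schurPairs_of_le_fst le_rfl⟩
  · exact disjoint_union_left.mpr
      ⟨disjoint_union_left.mpr
        ⟨disjoint_schurPairs_of_le_snd hst, disjoint_schurPairs_of_le_snd le_rfl⟩,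
        disjoint_schurPairs_of_le_mul_add ha hn'⟩

end Coloring

/-- For real `a ≥ 1` and `1 ≤ s ≤ t ≤ n` with `as + t ≥ n`, `t ≥ as` and
`s + as ≤ t`, the number of monochromatic generalized Schur triples under the
block coloring `R^s B^(t-s) R^(n-t)` is given by the four double sums
(a sum whose lower bound exceeds its upper bound being zero). -/
theorem genCount_formula (a : ℝ) (ha : 1 ≤ a) (n s t : ℕ) (hs : 1 ≤ s)
    (hst : s ≤ t) (htn : t ≤ n) (h1 : (n : ℝ) ≤ a * s + t)
    (h2 : a * s ≤ (t : ℝ)) (h3 : (s : ℝ) + a * s ≤ (t : ℝ)) :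
    genCountR a n s t =
      (∑ y ∈ Finset.Icc (1 : ℤ) ⌊(s : ℝ) / a⌋,
        (Finset.Icc (1 : ℤ) ((s : ℤ) - ⌊a * (y : ℝ)⌋)).card) +
      (∑ y ∈ Finset.Icc ((s : ℤ) + 1) ⌊((t : ℝ) - (s : ℝ)) / a⌋,
        (Finset.Icc ((s : ℤ) + 1) ((t : ℤ) - ⌊a * (y : ℝ)⌋)).card) +
      (∑ y ∈ Finset.Icc (1 : ℤ) ⌊((n : ℝ) - (t : ℝ)) / a⌋,
        (Finset.Icc ((t : ℤ) + 1) ((n : ℤ) - ⌊a * (y : ℝ)⌋)).card) +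
      (∑ y ∈ Finset.Icc ((t : ℤ) + 1) ⌊(n : ℝ) / a⌋,
        (Finset.Icc (1 : ℤ) ((n : ℤ) - ⌊a * (y : ℝ)⌋)).card) := by
  rw [genCountR_eq_card_union ha hst htn h1 h3, card_union_schurPairs (by linarith) hst h1]
  simp only [card_schurPairs ha, Nat.cast_zero, zero_add, sub_zero]
end

section
/- Let n, s, t ∈ ℕ with 1 ≤ s ≤ t ≤ n and assume 2s + t ≥ n, t ≥ 2s, and 3s ≤ t. Then the number of monochromatic generalized Schur triples (x, y, x + 2y) on [n] under the block coloring R^s B^{t−s} R^{n−t} equals M⁽²⁾(n,s,t) = ⌊s/2⌋·⌊(s−1)/2⌋ + ⌊(n−t)/2⌋·⌊(n−t−1)/2⌋ + ⌊(t−s)/2⌋·⌊(t−s−1)/2⌋ + 2s² − st + s. -/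
/-- The number `M⁽ᵏ⁾(n,s,t)` of monochromatic generalized Schur triples
`(x, y, x + ky)` in `[n]³` under the block coloring `R^s B^(t-s) R^(n-t)`:
pairs `(x,y) ∈ [n]²` such that `z = x + ky ≤ n` and `x, y, z` are all red
(`≤ s` or `> t`) or all blue (in `(s,t]`). -/
def genCount (k n s t : ℕ) : ℕ :=
  ((Finset.Icc 1 n ×ˢ Finset.Icc 1 n).filter
    (fun p => p.1 + k * p.2 ≤ n ∧
      (((p.1 ≤ s ∨ t < p.1) ∧ (p.2 ≤ s ∨ t < p.2) ∧
        (p.1 + k * p.2 ≤ s ∨ t < p.1 + k * p.2)) ∨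
       ((s < p.1 ∧ p.1 ≤ t) ∧ (s < p.2 ∧ p.2 ≤ t) ∧
        (s < p.1 + k * p.2 ∧ p.1 + k * p.2 ≤ t))))).card

/-!
The pairs `(x, y)` with `a < x`, `b < y`, `x + ky ≤ m` form a lattice triangle, and up to
translation it depends only on its size `m - a - kb`. For `k ≥ 2`, `(k + 1)s ≤ t` and `n ≤ ks + t`,
a monochromatic triple `(x, y, z)` is of one of three kinds: all entries at most `s`; `x, z > t` and
`y ≤ s`; or all entries in `(s, t]`. Each kind fills a triangle, of size `s`, `n - t` and
`t - (k + 1)s` respectively.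

Deleting the row `y = 1` from the triangle of size `m + k` removes `m` points and leaves a translate
of the triangle of size `m`. For `k = 2` this recurrence yields `⌊m/2⌋⌊(m - 1)/2⌋` points, and
applied `s` times it trades the size `t - (k + 1)s` for `t - s`.
-/

open Finset

/-- The lattice triangle of pairs `(x, y)` with `a < x`, `b < y` and `x + ky ≤ m`, in which the
monochromatic triples are counted. The bound `y ≤ m` in the encoding only matters for `k = 0`, where
it keeps the set finite. -/
def schurTriangle (k a b m : ℕ) : Finset (ℕ × ℕ) :=
  {p ∈ Ioc a m ×ˢ Ioc b m | p.1 + k * p.2 ≤ m}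

section Triangle

variable {k : ℕ}

lemma mem_schurTriangle (hk : 0 < k) {a b m : ℕ} {p : ℕ × ℕ} :
    p ∈ schurTriangle k a b m ↔ a < p.1 ∧ b < p.2 ∧ p.1 + k * p.2 ≤ m := by
  have hy : p.2 ≤ k * p.2 := Nat.le_mul_of_pos_left _ hk
  simp only [schurTriangle, mem_filter, mem_product, mem_Ioc]
  omega

lemma schurTriangle_eq_map (hk : 0 < k) (a b m : ℕ) :
    schurTriangle k a b (m + a + k * b) =
      (schurTriangle k 0 0 m).map (addRightEmbedding (a, b)) := by
  ext ⟨x, y⟩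
  simp only [mem_map, mem_schurTriangle hk, addRightEmbedding_apply, Prod.exists, Prod.mk_add_mk,
    Prod.mk.injEq]
  constructor
  · rintro ⟨hx, hy, hxy⟩
    obtain ⟨u, rfl⟩ := Nat.exists_eq_add_of_lt hx
    obtain ⟨v, rfl⟩ := Nat.exists_eq_add_of_lt hy
    exact ⟨u + 1, v + 1, ⟨by omega, by omega, by linarith⟩, by omega, by omega⟩
  · rintro ⟨u, v, ⟨hu, hv, huv⟩, rfl, rfl⟩
    exact ⟨by omega, by omega, by linarith⟩

lemma card_schurTriangle_translate (hk : 0 < k) (a b m : ℕ) :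
    #(schurTriangle k a b (m + a + k * b)) = #(schurTriangle k 0 0 m) := by
  rw [schurTriangle_eq_map hk, card_map]

lemma schurTriangle_eq_union_row (k m : ℕ) :
    schurTriangle k 0 0 (m + k) = schurTriangle k 0 1 (m + k) ∪ Ioc 0 m ×ˢ {1} := by
  ext ⟨x, y⟩
  simp only [mem_union, schurTriangle, mem_filter, mem_product, mem_Ioc, mem_singleton]
  obtain rfl | hy := eq_or_ne y 1 <;> omega

lemma card_schurTriangle_add (hk : 0 < k) (m : ℕ) :
    #(schurTriangle k 0 0 (m + k)) = #(schurTriangle k 0 0 m) + m := by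
  have hdisj : Disjoint (schurTriangle k 0 1 (m + k)) (Ioc 0 m ×ˢ {1}) := by
    simp only [disjoint_left, mem_schurTriangle hk, mem_product, mem_singleton]
    omega
  have hshift : #(schurTriangle k 0 1 (m + k)) = #(schurTriangle k 0 0 m) := by
    simpa using card_schurTriangle_translate hk 0 1 m
  rw [schurTriangle_eq_union_row, card_union_of_disjoint hdisj, hshift]
  simp

lemma card_schurTriangle_add_mul (hk : 0 < k) (m j : ℕ) :
    #(schurTriangle k 0 0 (m + k * j)) =
      #(schurTriangle k 0 0 m) + j * m + k * j.choose 2 := by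
  induction j with
  | zero => simp
  | succ j ih =>
    rw [Nat.mul_succ, ← add_assoc, card_schurTriangle_add hk, ih, Nat.choose_succ_succ' j 1,
      Nat.choose_one_right]
    ring

end Triangle

lemma half_mul_half_pred_add_two (m : ℕ) :
    (m + 2) / 2 * ((m + 1) / 2) = m / 2 * ((m - 1) / 2) + m := by
  cases m with
  | zero => rfl
  | succ m =>
    have hsum : (m + 1) / 2 + m / 2 = m := by omega
    rw [show (m + 1 + 2) / 2 = (m + 1) / 2 + 1 by omega,
      show (m + 1 + 1) / 2 = m / 2 + 1 by omega, Nat.add_sub_cancel]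
    linarith

lemma card_schurTriangle_two (m : ℕ) :
    #(schurTriangle 2 0 0 m) = m / 2 * ((m - 1) / 2) := by
  induction m using Nat.twoStepInduction with
  | zero => rfl
  | one => rfl
  | more m ih _ => rw [card_schurTriangle_add two_pos, ih, ← half_mul_half_pred_add_two]; rfl

section BlockColoring

variable {k n s t : ℕ}

lemma genCount_eq_card_union (hk : 2 ≤ k) (htn : t ≤ n) (hn : n ≤ k * s + t)
    (hst : (k + 1) * s ≤ t) :
    genCount k n s t =
      #(schurTriangle k 0 0 s ∪ schurTriangle k t 0 n ∪ schurTriangle k s s t) := by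
  have hk₀ : 0 < k := by omega
  unfold genCount
  congr 1
  ext ⟨x, y⟩
  have hle : y ≤ s → k * y ≤ k * s := Nat.mul_le_mul_left k
  have hge : s ≤ y → k * s + 2 * (y - s) ≤ k * y := fun h => by
    calc k * s + 2 * (y - s) ≤ k * s + k * (y - s) := by gcongr
      _ = k * y := by rw [← mul_add, Nat.add_sub_cancel' h]
  have hs : 2 * s ≤ k * s := Nat.mul_le_mul_right s hk
  have hy : y ≤ k * y := Nat.le_mul_of_pos_left y hk₀
  rw [add_one_mul] at hst
  have z_le_t : x ≤ s → y ≤ s → x + k * y ≤ t := by omega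
  have y_le_t : x + k * y ≤ n → y ≤ t := by omega
  have y_le_s : t < x → x + k * y ≤ n → y ≤ s := by omega
  simp only [mem_union, mem_schurTriangle hk₀, mem_filter, mem_product, mem_Icc]
  omega

lemma card_union_schurTriangle (hst : s ≤ t) :
    #(schurTriangle k 0 0 s ∪ schurTriangle k t 0 n ∪ schurTriangle k s s t) =
      #(schurTriangle k 0 0 s) + #(schurTriangle k t 0 n) + #(schurTriangle k s s t) := by
  rw [card_union_of_disjoint, card_union_of_disjoint] <;>
  · simp only [disjoint_left, mem_union, schurTriangle, mem_filter, mem_product, mem_Ioc]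
    omega

lemma genCount_eq_sum_card_schurTriangle (hk : 2 ≤ k) (htn : t ≤ n) (hn : n ≤ k * s + t)
    (hst : (k + 1) * s ≤ t) :
    genCount k n s t = #(schurTriangle k 0 0 s) + #(schurTriangle k 0 0 (n - t)) +
      #(schurTriangle k 0 0 (t - (k + 1) * s)) := by
  have hk₀ : 0 < k := by omega
  have hred : #(schurTriangle k t 0 n) = #(schurTriangle k 0 0 (n - t)) := by
    simpa [Nat.sub_add_cancel htn] using card_schurTriangle_translate hk₀ t 0 (n - t)
  have hsize : t - (k + 1) * s + s + k * s = t := by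
    rw [add_assoc, add_comm s, ← add_one_mul, Nat.sub_add_cancel hst]
  have hblue : #(schurTriangle k s s t) = #(schurTriangle k 0 0 (t - (k + 1) * s)) := by
    simpa only [hsize] using card_schurTriangle_translate hk₀ s s (t - (k + 1) * s)
  rw [genCount_eq_card_union hk htn hn hst,
    card_union_schurTriangle (le_trans (Nat.le_mul_of_pos_left s k.succ_pos) hst),
    hred, hblue]

lemma genCount_add_eq_sum_card_schurTriangle (hk : 2 ≤ k) (htn : t ≤ n) (hn : n ≤ k * s + t)
    (hst : (k + 1) * s ≤ t) :
    genCount k n s t + (s * (t - (k + 1) * s) + k * s.choose 2) =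
      #(schurTriangle k 0 0 s) + #(schurTriangle k 0 0 (n - t)) +
        #(schurTriangle k 0 0 (t - s)) := by
  have hsize : t - s = t - (k + 1) * s + k * s := by
    rw [add_one_mul] at hst ⊢
    omega
  rw [genCount_eq_sum_card_schurTriangle hk htn hn hst, hsize,
    card_schurTriangle_add_mul (by omega)]
  ring

end BlockColoring

/-- For `1 ≤ s ≤ t ≤ n` with `2s + t ≥ n`, `t ≥ 2s`, `3s ≤ t`, the number of
monochromatic triples `(x, y, x+2y)` under the coloring `R^s B^(t-s) R^(n-t)` is
`⌊s/2⌋⌊(s−1)/2⌋ + ⌊(n−t)/2⌋⌊(n−t−1)/2⌋ + ⌊(t−s)/2⌋⌊(t−s−1)/2⌋ + 2s² − st + s`. -/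
theorem genCount_two_formula (n s t : ℕ) (hs : 1 ≤ s) (hst : s ≤ t) (htn : t ≤ n)
    (h1 : n ≤ 2 * s + t) (h2 : 2 * s ≤ t) (h3 : 3 * s ≤ t) :
    (genCount 2 n s t : ℤ) =
      ((s / 2 : ℕ) : ℤ) * (((s - 1) / 2 : ℕ) : ℤ) +
      (((n - t) / 2 : ℕ) : ℤ) * (((n - t - 1) / 2 : ℕ) : ℤ) +
      (((t - s) / 2 : ℕ) : ℤ) * (((t - s - 1) / 2 : ℕ) : ℤ) +
      2 * (s : ℤ) ^ 2 - (s : ℤ) * (t : ℤ) + (s : ℤ) := by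
  have hcount := genCount_add_eq_sum_card_schurTriangle le_rfl htn h1 h3
  have hchoose : 2 * (s.choose 2 : ℤ) = s * (s - 1) := by
    rw [← Nat.cast_pred hs, Nat.choose_two_right]
    exact_mod_cast Nat.mul_div_cancel' s.even_mul_pred_self.two_dvd
  simp only [card_schurTriangle_two] at hcount
  zify [h3] at hcount
  push_cast
  linarith
end

section
/- For every n ∈ ℕ with n ≥ 1, the minimal number of monochromatic generalized Schur triples of the form (x, y, x + 2y) that can be attained under any 2-coloring of [n] of the block form R^s B^{t−s} R^{n−t} is M⁽²⁾(n) = ⌊(n² − 10n + 33)/44⌋; that is, min over 1 ≤ s ≤ t ≤ n of M⁽²⁾(n,s,t) equals ⌊(n² − 10n + 33)/44⌋. -/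
/-!
Suppose first that `3s ≤ t` and `n - t ≤ 2s + 2`. The monochromatic pairs then form three lattice
triangles: the pairs with `x + 2y ≤ s`, the blue pairs, and the red pairs with `x > t`, `y ≤ s`.
A triangle `x, y ≥ 1`, `x + 2y ≤ m` has `⌊(m - 1)² / 4⌋` points, so with `a = s - 1`,
`b = t - 3s - 1`, `c = n - t - 1` the count is `⌊a²/4⌋ + ⌊b²/4⌋ + ⌊c²/4⌋`. Since
`3a + b + c = n - 5`, Cauchy–Schwarz bounds this below by `(n - 5)² / 44` up to rounding, and the
bound is attained by integer points close to the line spanned by `(3, 1, 1)`.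

The other block colorings are no better. If `n < 3s`, the first triangle alone is large enough.
There is no blue triple while `t ≤ 3s + 2`, so enlarging `t` in that range only destroys red
triples, and otherwise one may take `3s ≤ t`. If `n - t > 2s + 2`, the third triangle is cut off at
height `s`; the loss is covered by the slack in Cauchy–Schwarz when `n ≤ 3t`, and by the red
triangle `x, y > t` when `n > 3t`.
-/

open Finset

/-- The lattice points `(x, y)` with `a < x`, `b < y ≤ h` and `x + k * y ≤ m`: a right triangle with
corner `(a, b)`, truncated at height `h`. The monochromatic pairs of a block coloring are counted by
cutting them into such regions. -/
def trapezoid (k a b h m : ℕ) : Finset (ℕ × ℕ) :=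
  (Ioc a m ×ˢ Ioc b h).filter fun p => p.1 + k * p.2 ≤ m

theorem mem_trapezoid {k a b h m : ℕ} {p : ℕ × ℕ} :
    p ∈ trapezoid k a b h m ↔ a < p.1 ∧ b < p.2 ∧ p.2 ≤ h ∧ p.1 + k * p.2 ≤ m := by
  simp only [trapezoid, mem_filter, mem_product, mem_Ioc]
  omega

theorem card_trapezoid (k a b h m : ℕ) :
    #(trapezoid k a b h m) = ∑ i ∈ range (h - b), (m - (a + k * b) - k * (i + 1)) := by
  have card_row (y : ℕ) : #{x ∈ Ioc a m | x + k * y ≤ m} = m - a - k * y := by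
    have row_eq : {x ∈ Ioc a m | x + k * y ≤ m} = Ioc a (m - k * y) := by
      ext x
      simp only [mem_filter, mem_Ioc]
      omega
    rw [row_eq, Nat.card_Ioc]
    omega
  have sum_rows : #(trapezoid k a b h m) = ∑ y ∈ Ioc b h, (m - a - k * y) := by
    rw [trapezoid, card_filter, sum_product_right]
    simp only [← card_filter, card_row]
  rw [sum_rows, ← Ico_add_one_add_one_eq_Ioc, sum_Ico_eq_sum_range, Nat.add_sub_add_right]
  refine sum_congr rfl fun i _ => ?_
  rw [show k * (b + 1 + i) = k * b + k * (i + 1) by ring]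
  omega

section BlockColoring

variable {k n s t : ℕ}

theorem sum_card_trapezoid_le_genCount (hk : 0 < k) (hst : s ≤ t) (htn : t ≤ n) :
    #(trapezoid k 0 0 s s) + #(trapezoid k s s t t) + #(trapezoid k t 0 s n) +
      #(trapezoid k t t n n) ≤ genCount k n s t := by
  rw [genCount, ← card_union_of_disjoint, ← card_union_of_disjoint, ← card_union_of_disjoint]
  · refine card_le_card fun p hp => ?_
    have := Nat.le_mul_of_pos_left p.2 hk
    simp only [mem_union, mem_trapezoid, mem_filter, mem_product, mem_Icc] at hp ⊢
    omega
  all_goals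
    refine disjoint_left.2 fun p hp hp' => ?_
    simp only [mem_union, mem_trapezoid] at hp hp'
    omega

theorem genCount_le_sum_card_trapezoid (hst : (k + 1) * s ≤ t) (hnt : n ≤ k * t + k) :
    genCount k n s t ≤
      #(trapezoid k 0 0 s s) + #(trapezoid k s s t t) + #(trapezoid k t 0 s n) := by
  refine le_trans (card_le_card fun p hp => ?_)
    ((card_union_le _ _).trans (Nat.add_le_add_right (card_union_le _ _) _))
  have mul_le_of_low : p.2 ≤ s → k * p.2 ≤ k * s := Nat.mul_le_mul_left k
  have le_mul_of_high : t + 1 ≤ p.2 → k * (t + 1) ≤ k * p.2 := Nat.mul_le_mul_left k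
  rw [add_one_mul] at hst
  rw [mul_add_one] at le_mul_of_high
  simp only [mem_union, mem_trapezoid, mem_filter, mem_product, mem_Icc] at hp ⊢
  have hk : 0 < k := Nat.pos_of_ne_zero (by rintro rfl; omega)
  have := Nat.le_mul_of_pos_left p.2 hk
  omega

theorem genCount_le_genCount_of_le {t' : ℕ} (htt' : t ≤ t') (ht' : t' ≤ (k + 1) * s + k) :
    genCount k n s t' ≤ genCount k n s t := by
  refine card_le_card (monotone_filter_right _ fun p hp => ?_)
  have le_mul_of_blue : s + 1 ≤ p.2 → k * (s + 1) ≤ k * p.2 := Nat.mul_le_mul_left k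
  rw [mul_add_one] at le_mul_of_blue
  rw [add_one_mul] at ht'
  omega

end BlockColoring

theorem sum_range_sub_two_mul {h m : ℕ} (hm : m ≤ 2 * h + 2) :
    ((∑ i ∈ range h, (m - 2 * (i + 1)) : ℕ) : ℤ) = ((m : ℤ) - 1) ^ 2 / 4 := by
  induction m using Nat.twoStepInduction generalizing h with
  | zero => simp
  | one => simp [show ∀ i, 1 - 2 * (i + 1) = 0 by omega]
  | more m ih _ =>
    have sq_step : ((m + 2 : ℕ) - 1 : ℤ) ^ 2 / 4 = ((m : ℤ) - 1) ^ 2 / 4 + m := by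
      rw [← Int.add_mul_ediv_left _ _ four_ne_zero]
      push_cast
      ring_nf
    cases h with
    | zero =>
      obtain rfl : m = 0 := by omega
      rfl
    | succ h =>
      rw [sum_range_succ', sq_step, ← ih (h := h) (by omega), Nat.cast_add]
      have shift (i : ℕ) : m + 2 - 2 * (i + 1 + 1) = m - 2 * (i + 1) := by omega
      simp only [shift, zero_add, mul_one, Nat.add_sub_cancel]

theorem mul_le_sum_range_sub_two_mul (h m : ℕ) :
    (h : ℤ) * (m - h - 1) ≤ (∑ i ∈ range h, (m - 2 * (i + 1)) : ℕ) := by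
  induction h with
  | zero => simp
  | succ h ih =>
    have last_term : (m : ℤ) - 2 * (h + 1) ≤ (m - 2 * (h + 1) : ℕ) := by omega
    rw [sum_range_succ, Nat.cast_add]
    push_cast at ih ⊢
    linarith

section CardTwo

variable {a b h m : ℕ}

theorem card_trapezoid_two (hm : a + 2 * b ≤ m) (hh : m ≤ a + 2 * h + 2) :
    (#(trapezoid 2 a b h m) : ℤ) = ((m : ℤ) - a - 2 * b - 1) ^ 2 / 4 := by
  rw [card_trapezoid, sum_range_sub_two_mul (by omega), Nat.cast_sub hm]
  push_cast
  ring_nf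

theorem card_trapezoid_two_diag (hm : 3 * a ≤ m) :
    (#(trapezoid 2 a a m m) : ℤ) = ((m : ℤ) - 3 * a - 1) ^ 2 / 4 := by
  rw [card_trapezoid_two (by omega) (by omega)]
  ring_nf

theorem card_trapezoid_two_origin (m : ℕ) :
    (#(trapezoid 2 0 0 m m) : ℤ) = ((m : ℤ) - 1) ^ 2 / 4 := by
  simpa using card_trapezoid_two_diag (a := 0) (Nat.zero_le m)

theorem mul_le_card_trapezoid_two (hb : b ≤ h) :
    ((h : ℤ) - b) * (m - a - b - h - 1) ≤ #(trapezoid 2 a b h m) := by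
  have hm : ((m : ℤ) - a - 2 * b) ≤ (m - (a + 2 * b) : ℕ) := by omega
  rw [card_trapezoid]
  refine le_trans ?_ (mul_le_sum_range_sub_two_mul _ _)
  rw [Nat.cast_sub hb]
  exact mul_le_mul_of_nonneg_left (by linarith) (by omega)

end CardTwo

theorem sq_le_four_mul_sq_ediv_four_add_one (x : ℤ) : x ^ 2 ≤ 4 * (x ^ 2 / 4) + 1 := by
  rcases Int.even_or_odd' x with ⟨y, rfl | rfl⟩ <;> ring_nf <;> omega

theorem sq_three_mul_add_add_le (a b c : ℤ) :
    (3 * a + b + c) ^ 2 ≤ 11 * (a ^ 2 + b ^ 2 + c ^ 2) := by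
  linarith [sq_nonneg (a - 3 * b), sq_nonneg (a - 3 * c), sq_nonneg (b - c)]

theorem sq_sub_five_le_of_le_three_mul {n s t : ℤ} (hs : 0 ≤ s) (hn : t + 2 * s + 3 ≤ n)
    (hnt : n ≤ 3 * t) :
    (n - 5) ^ 2 ≤ 11 * ((s - 1) ^ 2 + (t - 3 * s - 1) ^ 2 + 4 * (s * (n - t - s - 1))) + 13 := by
  -- The difference of the two sides is concave in `n`; the first product compares it with the chord
  -- over `[t + 2 * s + 3, 3 * t]`.
  have chord : 0 ≤ (n - (t + 2 * s + 3)) * (3 * t - n) :=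
    mul_nonneg (sub_nonneg.2 hn) (sub_nonneg.2 hnt)
  have slope : 0 ≤ s * (n - (t + 2 * s + 3)) := mul_nonneg hs (sub_nonneg.2 hn)
  nlinarith [sq_nonneg (4 * (3 * t - n) - 21 * s)]

theorem sq_sub_five_le_of_three_mul_le {n s t : ℤ} (hs : 0 ≤ s) (ht : 0 ≤ t) (hnt : 3 * t ≤ n) :
    (n - 5) ^ 2 ≤ 11 * ((s - 1) ^ 2 + (t - 3 * s - 1) ^ 2 + 4 * (s * (n - t - s - 1)) +
      (n - 3 * t - 1) ^ 2) + 2 := by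
  obtain ⟨e, he, rfl⟩ : ∃ e, 0 ≤ e ∧ n = 3 * t + e := ⟨n - 3 * t, by linarith, by ring⟩
  have hst : 0 ≤ s * t := mul_nonneg hs ht
  have hse : 0 ≤ s * e := mul_nonneg hs he
  nlinarith [sq_nonneg (2 * t - 3 * e + 4), sq_nonneg s, sq_nonneg e]

section TwoColoring

variable {n s t : ℕ}

theorem genCount_two_eq (hst : 3 * s ≤ t) (htn : t ≤ n) (hn : n ≤ t + 2 * s + 2) :
    (genCount 2 n s t : ℤ) =
      ((s : ℤ) - 1) ^ 2 / 4 + ((t : ℤ) - 3 * s - 1) ^ 2 / 4 + ((n : ℤ) - t - 1) ^ 2 / 4 := by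
  have lower := sum_card_trapezoid_le_genCount two_pos (show s ≤ t by omega) htn
  have upper := genCount_le_sum_card_trapezoid (n := n) hst (by omega)
  have card_low := card_trapezoid_two_origin s
  have card_blue := card_trapezoid_two_diag hst
  have card_high : (#(trapezoid 2 t 0 s n) : ℤ) = ((n : ℤ) - t - 1) ^ 2 / 4 := by
    simpa using card_trapezoid_two (a := t) (b := 0) htn hn
  omega

theorem sq_sub_five_le_genCount_of_lt_three_mul (hst : s ≤ t) (htn : t ≤ n)
    (hns : n < 3 * s) :
    ((n : ℤ) - 5) ^ 2 ≤ 44 * genCount 2 n s t + 35 := by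
  have regions := sum_card_trapezoid_le_genCount two_pos hst htn
  have card_low := card_trapezoid_two_origin s
  have round_low := sq_le_four_mul_sq_ediv_four_add_one (s - 1)
  have low : ((s : ℤ) - 1) ^ 2 ≤ 4 * genCount 2 n s t + 1 := by omega
  zify at hst htn hns
  nlinarith [low]

theorem sq_sub_five_le_genCount_of_le_add (hst : 3 * s ≤ t) (htn : t ≤ n)
    (hn : n ≤ t + 2 * s + 2) :
    ((n : ℤ) - 5) ^ 2 ≤ 44 * genCount 2 n s t + 35 := by
  have round_low := sq_le_four_mul_sq_ediv_four_add_one (s - 1)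
  have round_blue := sq_le_four_mul_sq_ediv_four_add_one (t - 3 * s - 1)
  have round_high := sq_le_four_mul_sq_ediv_four_add_one (n - t - 1)
  calc ((n : ℤ) - 5) ^ 2
      = (3 * ((s : ℤ) - 1) + (t - 3 * s - 1) + (n - t - 1)) ^ 2 := by ring
    _ ≤ 11 * (((s : ℤ) - 1) ^ 2 + (t - 3 * s - 1) ^ 2 + (n - t - 1) ^ 2) :=
        sq_three_mul_add_add_le _ _ _
    _ ≤ 44 * genCount 2 n s t + 35 := by
        rw [genCount_two_eq hst htn hn]
        linarith

theorem sq_sub_five_le_genCount_of_add_le (hst : 3 * s ≤ t) (hn : t + 2 * s + 3 ≤ n) :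
    ((n : ℤ) - 5) ^ 2 ≤ 44 * genCount 2 n s t + 35 := by
  have regions := sum_card_trapezoid_le_genCount (n := n) two_pos (show s ≤ t by omega) (by omega)
  have card_low := card_trapezoid_two_origin s
  have card_blue := card_trapezoid_two_diag hst
  have card_high := mul_le_card_trapezoid_two (a := t) (m := n) (Nat.zero_le s)
  have round_low := sq_le_four_mul_sq_ediv_four_add_one (s - 1)
  have round_blue := sq_le_four_mul_sq_ediv_four_add_one (t - 3 * s - 1)
  simp only [Nat.cast_zero, sub_zero] at card_high
  rcases le_total n (3 * t) with hnt | hnt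
  · have := sq_sub_five_le_of_le_three_mul (n := n) (s := s) (t := t)
      (by omega) (by omega) (by omega)
    omega
  · have card_top := card_trapezoid_two_diag hnt
    have round_top := sq_le_four_mul_sq_ediv_four_add_one (n - 3 * t - 1)
    have := sq_sub_five_le_of_three_mul_le (n := n) (s := s) (t := t)
      (by omega) (by omega) (by omega)
    omega

-- The constant is the largest one giving `⌊((n - 5)² + 8) / 44⌋ ≤ genCount 2 n s t`; rounding costs
-- at most `11` per triangle.
theorem sq_sub_five_le_genCount (hst : s ≤ t) (htn : t ≤ n) :
    ((n : ℤ) - 5) ^ 2 ≤ 44 * genCount 2 n s t + 35 := by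
  rcases lt_or_ge n (3 * s) with hns | hns
  · exact sq_sub_five_le_genCount_of_lt_three_mul hst htn hns
  wlog hst' : 3 * s ≤ t generalizing t
  · have anti := genCount_le_genCount_of_le (k := 2) (n := n) (le_of_not_ge hst')
      (Nat.le_add_right (3 * s) 2)
    have := this (t := 3 * s) (by omega) hns le_rfl
    omega
  rcases le_or_gt n (t + 2 * s + 2) with hn | hn
  · exact sq_sub_five_le_genCount_of_le_add hst' htn hn
  · exact sq_sub_five_le_genCount_of_add_le hst' hn

end TwoColoring

theorem exists_triple_sum_sq_div_four_le (N : ℕ) :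
    ∃ a b c : ℕ, 3 * a + b + c = N ∧ c ≤ 2 * a + 3 ∧
      44 * (a ^ 2 / 4 + b ^ 2 / 4 + c ^ 2 / 4) ≤ N ^ 2 + 8 := by
  have residues : ∀ r < 22, ∃ a ≤ r, ∃ b ≤ r, ∃ c ≤ r, 3 * a + b + c = r ∧ c ≤ 2 * a + 3 ∧
      44 * (a ^ 2 / 4 + b ^ 2 / 4 + c ^ 2 / 4) ≤ r ^ 2 + 8 := by
    decide
  have sq_add_div_four (m x : ℕ) : (2 * m + x) ^ 2 / 4 = x ^ 2 / 4 + (m ^ 2 + m * x) := by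
    rw [← Nat.add_mul_div_left _ _ four_pos]
    ring_nf
  -- Adding `(6, 2, 2)` to `(a, b, c)` adds `22` to `N` and the same amount to both sides.
  obtain ⟨a, -, b, -, c, -, hsum, hc, hle⟩ := residues (N % 22) (Nat.mod_lt _ (by norm_num))
  obtain ⟨q, hq⟩ : ∃ q, N = 22 * q + (3 * a + b + c) := ⟨N / 22, by omega⟩
  rw [← hsum] at hle
  refine ⟨2 * (3 * q) + a, 2 * q + b, 2 * q + c, by omega, by omega, ?_⟩
  rw [sq_add_div_four, sq_add_div_four, sq_add_div_four, hq]
  linarith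

theorem exists_genCount_two_le {n : ℕ} (hn : 1 ≤ n) :
    ∃ s t : ℕ, 1 ≤ s ∧ s ≤ t ∧ t ≤ n ∧
      44 * (genCount 2 n s t : ℤ) ≤ ((n : ℤ) - 5) ^ 2 + 8 := by
  rcases lt_or_ge n 5 with hn5 | hn5
  · refine ⟨1, n, le_rfl, hn, le_rfl, ?_⟩
    interval_cases n <;> decide
  · obtain ⟨a, b, c, hsum, hc, hle⟩ := exists_triple_sum_sq_div_four_le (n - 5)
    obtain rfl : n = 3 * a + b + c + 5 := by omega
    refine ⟨a + 1, 3 * a + b + 4, by omega, by omega, by omega, ?_⟩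
    rw [genCount_two_eq (by omega) (by omega) (by omega)]
    have shift_s : ((a + 1 : ℕ) : ℤ) - 1 = a := by omega
    have shift_t : ((3 * a + b + 4 : ℕ) : ℤ) - 3 * (a + 1 : ℕ) - 1 = b := by omega
    have shift_n : ((3 * a + b + c + 5 : ℕ) : ℤ) - (3 * a + b + 4 : ℕ) - 1 = c := by omega
    rw [shift_s, shift_t, shift_n, Nat.cast_add _ 5, Nat.cast_ofNat, add_sub_cancel_right]
    rw [Nat.add_sub_cancel] at hle
    exact_mod_cast hle

/-- For every `n ≥ 1`, the minimum over all block colorings `R^s B^(t-s) R^(n-t)`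
(`1 ≤ s ≤ t ≤ n`) of the number of monochromatic triples `(x, y, x+2y)` equals
`⌊(n² − 10n + 33)/44⌋`. -/
theorem min_genCount_two (n : ℕ) (hn : 1 ≤ n) :
    (∀ s t : ℕ, 1 ≤ s → s ≤ t → t ≤ n →
      ((n : ℤ) ^ 2 - 10 * n + 33) / 44 ≤ (genCount 2 n s t : ℤ)) ∧
    (∃ s t : ℕ, 1 ≤ s ∧ s ≤ t ∧ t ≤ n ∧
      (genCount 2 n s t : ℤ) = ((n : ℤ) ^ 2 - 10 * n + 33) / 44) := by
  have sq_form : (n : ℤ) ^ 2 - 10 * n + 33 = ((n : ℤ) - 5) ^ 2 + 8 := by ring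
  rw [sq_form]
  refine ⟨fun s t _ hst htn => ?_, ?_⟩
  · have := sq_sub_five_le_genCount hst htn
    omega
  · obtain ⟨s, t, hs, hst, htn, upper⟩ := exists_genCount_two_le hn
    have lower := sq_sub_five_le_genCount hst htn
    exact ⟨s, t, hs, hst, htn, by omega⟩
end

section
/- For every n ∈ ℕ with n ≥ 1, the minimal number of monochromatic generalized Schur triples of the form (x, y, x + 4y) that can be attained under any 2-coloring of [n] of the block form R^s B^{t−s} R^{n−t} is M⁽⁴⁾(n) = ⌊(n² − 28n + 245)/216⌋ − c(n), where c(n) = 1 if n mod 108 belongs to the set I = {0, 1, 27, 28, 43, 47, 48, 53, 58, 63, 67, 68, 69, 73, 78, 83, 88, 89, 93}, and c(n) = 0 otherwise. -/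
/-- The correction term for `a = 4`: `1` if `n mod 108` lies in the exceptional
set `I = {0, 1, 27, 28, 43, 47, 48, 53, 58, 63, 67, 68, 69, 73, 78, 83, 88, 89, 93}`,
and `0` otherwise. -/
def corr4 (n : ℕ) : ℤ :=
  if n % 108 ∈ [0, 1, 27, 28, 43, 47, 48, 53, 58, 63, 67, 68, 69, 73, 78,
      83, 88, 89, 93] then 1 else 0

/-!
The pairs `x, y ≥ 1` with `x + k y ≤ m` number `triangleCount k m`, a quadratic quasi-polynomial,
and the monochromatic pairs of a block coloring contain disjoint translates of such triangles.
For `k = 4` and `n - t ≤ 4 (s + 1)` this bounds the count below by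
`T(s) + T(n - t) + T(t - 5 s)` with `T = triangleCount 4`, and for colorings near the optimum this
is the exact count. With `a = s`, `b = n - t`, `c = t - 5 s` it remains to minimize
`T(a) + T(b) + T(c)` over `5 a + b + c = n`. Both this sum and the claimed minimum change by the
same amount under `(a, b, c, n) ↦ (a + 20, b + 4, c + 4, n + 108)`, so `n` may be taken modulo
`108`, and completing the square leaves finitely many `(a, b, c)` to inspect. A minimizer with
`b` and `c` as equal as possible always exists. If `n - t > 4 (s + 1)`, estimating each
triangle count by `m (m - 4) / 8` is already enough.
-/

open Finset

/-- The lattice points `(x, y)` of the triangle `x > a`, `y > b`, `x + k y ≤ N`. The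
monochromatic pairs of a block coloring are counted by decomposing them into such triangles. -/
def cornerTriangle (k a b N : ℕ) : Finset (ℕ × ℕ) :=
  {p ∈ Ioc a N ×ˢ Ioc b N | p.1 + k * p.2 ≤ N}

/-- The quasi-polynomial `∑_{i=1}^{⌊m/k⌋} (m - k i)`. For `m ≥ 0` it counts the pairs `x, y ≥ 1`
with `x + k y ≤ m`; its extension to all integers `m` obeys the same translation rule. -/
def triangleCount (k m : ℤ) : ℤ :=
  m / k * m - k * (m / k * (m / k + 1) / 2)

section TriangleCount

variable {k : ℤ}

lemma two_mul_triangleCount (k m : ℤ) :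
    2 * triangleCount k m = m / k * (2 * m - k * (m / k + 1)) := by
  have half : 2 * (m / k * (m / k + 1) / 2) = m / k * (m / k + 1) :=
    Int.two_mul_ediv_two_of_even (Int.even_mul_succ_self _)
  unfold triangleCount
  linear_combination -k * half

lemma two_mul_triangleCount_add_mul (hk : k ≠ 0) (m j : ℤ) :
    2 * triangleCount k (m + k * j) = 2 * triangleCount k m + 2 * j * m + k * j * (j - 1) := by
  rw [two_mul_triangleCount, two_mul_triangleCount, Int.add_mul_ediv_left m j hk]
  ring

lemma triangleCount_eq_zero {m : ℤ} (hm : 0 ≤ m) (hmk : m ≤ k) : triangleCount k m = 0 := by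
  rcases hmk.lt_or_eq with hlt | rfl
  · simp [triangleCount, Int.ediv_eq_zero_of_lt hm hlt]
  · rcases hm.eq_or_lt with rfl | hpos
    · simp [triangleCount]
    · simp [triangleCount, Int.ediv_self hpos.ne']

lemma mul_sub_le_two_mul_triangleCount (hk : 0 < k) (m : ℤ) :
    m * (m - k) ≤ 2 * k * triangleCount k m := by
  have remainder : 2 * k * triangleCount k m = m * (m - k) + m % k * (k - m % k) := by
    linear_combination k * two_mul_triangleCount k m +
      (m % k - k * (m / k) + m - k) * Int.mul_ediv_add_emod m k
  have : 0 ≤ m % k * (k - m % k) :=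
    mul_nonneg (Int.emod_nonneg m hk.ne') (sub_nonneg.2 (Int.emod_lt_of_pos m hk).le)
  linarith

end TriangleCount

section Counting

variable {k : ℕ}

lemma mem_cornerTriangle (hk : 0 < k) {a b N : ℕ} {p : ℕ × ℕ} :
    p ∈ cornerTriangle k a b N ↔ a < p.1 ∧ b < p.2 ∧ p.1 + k * p.2 ≤ N := by
  have : p.2 ≤ k * p.2 := Nat.le_mul_of_pos_left _ hk
  simp only [cornerTriangle, mem_filter, mem_product, mem_Ioc]
  omega

lemma card_cornerTriangle_succ (hk : 0 < k) (a b N : ℕ) :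
    #(cornerTriangle k a b N) = #(cornerTriangle k a (b + 1) N) + (N - a - k * (b + 1)) := by
  have split : cornerTriangle k a b N =
      cornerTriangle k a (b + 1) N ∪ Ioc a (N - k * (b + 1)) ×ˢ {b + 1} := by
    ext ⟨x, y⟩
    simp only [mem_union, mem_cornerTriangle hk, mem_product, mem_Ioc, mem_singleton]
    rcases eq_or_ne y (b + 1) with rfl | hy <;> omega
  have disj : Disjoint (cornerTriangle k a (b + 1) N) (Ioc a (N - k * (b + 1)) ×ˢ {b + 1}) := by
    refine disjoint_left.2 fun p hp hp' ↦ ?_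
    simp only [mem_cornerTriangle hk, mem_product, mem_singleton] at hp hp'
    omega
  rw [split, card_union_of_disjoint disj, card_product, Nat.card_Ioc, card_singleton, mul_one]
  omega

theorem card_cornerTriangle (hk : 0 < k) (a b N : ℕ) :
    (#(cornerTriangle k a b N) : ℤ) = triangleCount k (N - a - k * b : ℕ) := by
  induction hm : N - a - k * b using Nat.strong_induction_on generalizing b with
  | _ m ih =>
    rcases le_or_gt m k with hmk | hkm
    · have empty : cornerTriangle k a b N = ∅ := by
        refine eq_empty_of_forall_notMem fun p hp ↦ ?_
        rw [mem_cornerTriangle hk] at hp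
        have : k * (b + 1) ≤ k * p.2 := Nat.mul_le_mul_left k hp.2.1
        rw [mul_add_one] at this
        omega
      rw [empty, triangleCount_eq_zero (by positivity) (by exact_mod_cast hmk)]
      simp
    · have next_row : N - a - k * (b + 1) = m - k := by rw [mul_add_one]; omega
      have shift := two_mul_triangleCount_add_mul (k := k) (by exact_mod_cast hk.ne') (m - k) 1
      rw [mul_one, sub_add_cancel] at shift
      rw [card_cornerTriangle_succ hk, Nat.cast_add, ih (m - k) (by omega) (b + 1) next_row,
        next_row, Nat.cast_sub hkm.le]
      linarith

lemma triangleCount_natCast_nonneg (hk : 0 < k) (m : ℕ) : 0 ≤ triangleCount k m := by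
  simpa using (card_cornerTriangle hk 0 0 m).symm.trans_ge (Nat.cast_nonneg _)

/-- The monochromatic pairs `(x, y)` of the coloring `R^s B^(t-s) R^(n-t)` that are present for
all block lengths: `x`, `y` and `x + k y` in the first red block; `x` in the last and `y` in the
first red block (a difference of two triangles); all three blue; all three in the last red block. -/
def blockPairs (k n s t : ℕ) : Finset (ℕ × ℕ) :=
  cornerTriangle k 0 0 s ∪ (cornerTriangle k t 0 n \ cornerTriangle k t s n) ∪
    cornerTriangle k s s t ∪ cornerTriangle k t t n

lemma card_blockPairs (hk : 0 < k) {n s t : ℕ} (hst : s ≤ t) :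
    (#(blockPairs k n s t) : ℤ) + triangleCount k (n - t - k * s : ℕ) =
      triangleCount k s + triangleCount k (n - t : ℕ) + triangleCount k (t - s - k * s : ℕ) +
        triangleCount k (n - t - k * t : ℕ) := by
  have sub : cornerTriangle k t s n ⊆ cornerTriangle k t 0 n := fun p hp ↦ by
    rw [mem_cornerTriangle hk] at hp ⊢
    omega
  have strip : (#(cornerTriangle k t 0 n \ cornerTriangle k t s n) : ℤ) +
      #(cornerTriangle k t s n) = #(cornerTriangle k t 0 n) := by
    exact_mod_cast card_sdiff_add_card_eq_card sub
  unfold blockPairs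
  rw [card_union_of_disjoint, card_union_of_disjoint, card_union_of_disjoint]
  · push_cast
    simp only [card_cornerTriangle hk, mul_zero, Nat.sub_zero] at strip ⊢
    linarith
  all_goals
    refine disjoint_left.2 fun p hp hp' ↦ ?_
    simp only [mem_union, mem_sdiff, mem_cornerTriangle hk] at hp hp'
    omega

lemma card_blockPairs_le_genCount (hk : 0 < k) {n s t : ℕ} (hst : s ≤ t) (htn : t ≤ n) :
    #(blockPairs k n s t) ≤ genCount k n s t := by
  refine card_le_card fun p hp ↦ ?_
  have : p.2 ≤ k * p.2 := Nat.le_mul_of_pos_left _ hk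
  simp only [blockPairs, mem_union, mem_sdiff, mem_cornerTriangle hk] at hp
  simp only [mem_filter, mem_product, mem_Icc]
  omega

lemma genCount_le_card_blockPairs (hk : 0 < k) {n s t : ℕ} (hs : s + k * s ≤ t)
    (hn : n ≤ k * (t + 1)) : genCount k n s t ≤ #(blockPairs k n s t) := by
  refine card_le_card fun p hp ↦ ?_
  simp only [mem_filter, mem_product, mem_Icc] at hp
  simp only [blockPairs, mem_union, mem_sdiff, mem_cornerTriangle hk]
  have low : p.2 ≤ s → k * p.2 ≤ k * s := Nat.mul_le_mul_left k
  have high : t < p.2 → k * (t + 1) ≤ k * p.2 := Nat.mul_le_mul_left k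
  omega

end Counting

/-- The number of pairs in `blockPairs 4 n s t` when `n - t ≤ 4 * (s + 1)`, in terms of `a = s`,
`b = n - t` and `c = t - 5 * s`, so that `n = 5 * a + b + c`. -/
def blockCount (a b c : ℤ) : ℤ :=
  triangleCount 4 a + triangleCount 4 b + triangleCount 4 c

lemma blockCount_add_period (a b c k : ℤ) :
    blockCount (a + 20 * k) (b + 4 * k) (c + 4 * k) =
      blockCount a b c + 54 * k ^ 2 + k * (5 * a + b + c) - 14 * k := by
  have shift := two_mul_triangleCount_add_mul (k := 4) (by norm_num)
  have shift_a := shift a (5 * k)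
  rw [← mul_assoc, show (4 : ℤ) * 5 = 20 by norm_num] at shift_a
  unfold blockCount
  linarith [shift b k, shift c k]

/-- The value `M⁽⁴⁾(n)` to be established. -/
def minValue (n : ℕ) : ℤ := ((n : ℤ) ^ 2 - 28 * n + 245) / 216 - corr4 n

lemma mul_minValue_le (n : ℕ) : 216 * minValue n ≤ (n : ℤ) ^ 2 - 28 * n + 245 := by
  have : 0 ≤ corr4 n := by unfold corr4; split <;> norm_num
  unfold minValue
  omega

lemma minValue_add_period (n k : ℕ) :
    minValue (n + 108 * k) = minValue n + 54 * (k : ℤ) ^ 2 + k * n - 14 * k := by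
  have corr4_periodic : corr4 (n + 108 * k) = corr4 n := by
    unfold corr4
    rw [Nat.add_mul_mod_self_left]
  have expand : ((n + 108 * k : ℕ) : ℤ) ^ 2 - 28 * (n + 108 * k : ℕ) + 245 =
      (n : ℤ) ^ 2 - 28 * n + 245 + 216 * (54 * (k : ℤ) ^ 2 + k * n - 14 * k) := by
    push_cast
    ring
  unfold minValue
  rw [corr4_periodic, expand, Int.add_mul_ediv_left _ _ (by norm_num)]
  ring

lemma minValue_mono : Monotone minValue := by
  have step_residue : ∀ r < 108, minValue r ≤ minValue (r + 1) := by
    unfold minValue corr4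
    decide +kernel
  refine monotone_nat_of_le_succ fun n ↦ ?_
  have step := step_residue (n % 108) (Nat.mod_lt n (by norm_num))
  rw [← Nat.mod_add_div n 108, add_right_comm, minValue_add_period, minValue_add_period]
  have : (0 : ℤ) ≤ n / 108 := by positivity
  push_cast
  linarith

section LowerBound

/-- The point `(2 + 5 (n - 14) / 27, 2 + (n - 14) / 27, 2 + (n - 14) / 27)` minimizes the lower
bound `a (a - 4) + b (b - 4) + c (c - 4)` for `8 * blockCount a b c` on `5 a + b + c = n`. -/
lemma near_minimizer_of_blockCount_lt {n : ℕ} {a b c : ℤ} (h : 5 * a + b + c = n)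
    (hlt : blockCount a b c < minValue n) :
    |27 * (a - 2) - 5 * ((n : ℤ) - 14)| < 28 ∧ |27 * (b - 2) - ((n : ℤ) - 14)| < 101 := by
  have hmin := mul_minValue_le n
  have ha := mul_sub_le_two_mul_triangleCount (k := 4) (by norm_num) a
  have hb := mul_sub_le_two_mul_triangleCount (k := 4) (by norm_num) b
  have hc := mul_sub_le_two_mul_triangleCount (k := 4) (by norm_num) c
  unfold blockCount at hlt
  set p := 27 * (a - 2) - 5 * ((n : ℤ) - 14) with hp
  set q := 27 * (b - 2) - ((n : ℤ) - 14) with hq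
  have energy : p ^ 2 + q ^ 2 + (5 * p + q) ^ 2 =
      729 * ((a - 2) ^ 2 + (b - 2) ^ 2 + (c - 2) ^ 2) - 27 * ((n : ℤ) - 14) ^ 2 := by
    rw [hp, hq, ← h]
    ring
  have energy_lt : p ^ 2 + q ^ 2 + (5 * p + q) ^ 2 < 10071 := by
    rw [energy]
    linarith
  constructor <;> refine abs_lt_of_sq_lt_sq ?_ (by norm_num)
  · linarith [sq_nonneg (5 * p + 2 * q), energy_lt]
  · linarith [sq_nonneg p, sq_nonneg (5 * p + q), energy_lt]

lemma minValue_le_blockCount_near_minimizer :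
    ∀ n : ℕ, n < 108 →
      ∀ a ∈ Icc (5 * ((n : ℤ) - 14) / 27 + 1) (5 * ((n : ℤ) - 14) / 27 + 3),
      ∀ b ∈ Icc (((n : ℤ) - 14) / 27 - 2) (((n : ℤ) - 14) / 27 + 7),
        minValue n ≤ blockCount a b (n - 5 * a - b) := by
  unfold minValue corr4 blockCount triangleCount
  decide +kernel

lemma minValue_le_blockCount_of_lt {n : ℕ} (hn : n < 108) {a b c : ℤ} (h : 5 * a + b + c = n) :
    minValue n ≤ blockCount a b c := by
  by_contra! hlt
  obtain ⟨ha, hb⟩ := near_minimizer_of_blockCount_lt h hlt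
  rw [abs_lt] at ha hb
  obtain rfl : c = n - 5 * a - b := by linarith
  have := minValue_le_blockCount_near_minimizer n hn a (mem_Icc.2 (by omega)) b
    (mem_Icc.2 (by omega))
  linarith

theorem minValue_le_blockCount {n : ℕ} {a b c : ℤ} (h : 5 * a + b + c = n) :
    minValue n ≤ blockCount a b c := by
  obtain ⟨r, k, hr, rfl⟩ : ∃ r k, r < 108 ∧ n = r + 108 * k :=
    ⟨n % 108, n / 108, Nat.mod_lt n (by norm_num), (Nat.mod_add_div n 108).symm⟩
  push_cast at h
  have sum_residue : 5 * (a - 20 * k) + (b - 4 * k) + (c - 4 * k) = (r : ℤ) := by linarith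
  have residue := minValue_le_blockCount_of_lt hr sum_residue
  have shift := blockCount_add_period (a - 20 * k) (b - 4 * k) (c - 4 * k) k
  rw [sum_residue] at shift
  simp only [sub_add_cancel] at shift
  rw [minValue_add_period, shift]
  linarith

variable {n s t : ℕ}

lemma minValue_le_genCount_of_sub_le (hst : s ≤ t) (htn : t ≤ n) (hnt : n - t ≤ 4 * s + 4) :
    minValue n ≤ genCount 4 n s t := by
  have card := card_blockPairs (k := 4) (by norm_num) (n := n) hst
  have card_le := card_blockPairs_le_genCount (k := 4) (by norm_num) hst htn
  have no_overlap : triangleCount 4 (n - t - 4 * s : ℕ) = 0 :=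
    triangleCount_eq_zero (by positivity) (by omega)
  have last_nonneg := triangleCount_natCast_nonneg (k := 4) (by norm_num) (n - t - 4 * t)
  simp only [Nat.cast_ofNat] at card last_nonneg
  have mono : minValue n ≤ minValue (5 * s + (n - t) + (t - s - 4 * s)) :=
    minValue_mono (by omega)
  have bound : minValue (5 * s + (n - t) + (t - s - 4 * s)) ≤
      blockCount s (n - t : ℕ) (t - s - 4 * s : ℕ) :=
    minValue_le_blockCount (by push_cast; ring)
  unfold blockCount at bound
  linarith [(Nat.cast_le (α := ℤ)).2 card_le]

lemma sq_sub_le_of_le_sub {s t n : ℤ} (hs : 1 ≤ s) (hst : s ≤ t) (hnt : 4 * s + 5 ≤ n - t) :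
    n ^ 2 - 28 * n + 245 ≤
      27 * (s * (s - 4) + 8 * (s * (n - t - 4 * s) + 2 * s * (s - 1)) +
        max (t - 5 * s) 0 * (max (t - 5 * s) 0 - 4) +
        max (n - 5 * t) 0 * (max (n - 5 * t) 0 - 4)) := by
  rcases le_total 0 (t - 5 * s) with hu | hu <;> rcases le_total 0 (n - 5 * t) with hv | hv <;>
    simp only [max_eq_left, max_eq_right, hu, hv]
  · nlinarith [sq_nonneg (2 * (t - 5 * s) - 5 * (n - 5 * t))]
  · nlinarith [mul_nonneg (sub_nonneg.2 hnt) hu, sq_nonneg (s - 1), sq_nonneg (t - 5 * s - 2)]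
  · nlinarith
  · nlinarith

lemma minValue_le_genCount_of_le_sub (hs : 1 ≤ s) (hst : s ≤ t) (hnt : 4 * s + 5 ≤ n - t) :
    minValue n ≤ genCount 4 n s t := by
  have htn : t ≤ n := by omega
  have card := card_blockPairs (k := 4) (by norm_num) (n := n) hst
  have card_le := card_blockPairs_le_genCount (k := 4) (by norm_num) hst htn
  have strip := two_mul_triangleCount_add_mul (k := 4) (by norm_num) (n - t - 4 * s : ℕ) s
  rw [show ((n - t - 4 * s : ℕ) : ℤ) + 4 * s = (n - t : ℕ) by omega] at strip
  have quadratic := sq_sub_le_of_le_sub (s := s) (t := t) (n := n) (by omega) (by omega) (by omega)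
  rw [show max ((t : ℤ) - 5 * s) 0 = (t - s - 4 * s : ℕ) by omega,
    show max ((n : ℤ) - 5 * t) 0 = (n - t - 4 * t : ℕ) by omega] at quadratic
  have triangle_ge := mul_sub_le_two_mul_triangleCount (k := 4) (by norm_num)
  have first := triangle_ge s
  have blue := triangle_ge (t - s - 4 * s : ℕ)
  have last := triangle_ge (n - t - 4 * t : ℕ)
  have cast_sub : ((n - t - 4 * s : ℕ) : ℤ) = n - t - 4 * s := by omega
  simp only [Nat.cast_ofNat] at card
  rw [cast_sub] at card strip
  linarith [mul_minValue_le n, (Nat.cast_le (α := ℤ)).2 card_le]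

theorem minValue_le_genCount (hs : 1 ≤ s) (hst : s ≤ t) (htn : t ≤ n) :
    minValue n ≤ genCount 4 n s t := by
  rcases le_or_gt (n - t) (4 * s + 4) with hnt | hnt
  · exact minValue_le_genCount_of_sub_le hst htn hnt
  · exact minValue_le_genCount_of_le_sub hs hst hnt

end LowerBound

section Attained

lemma exists_balanced_of_lt :
    ∀ n : ℕ, n < 113 → 5 ≤ n → ∃ s < 21, 1 ≤ s ∧ 5 * s ≤ n ∧ n ≤ 13 * s + 9 ∧
      blockCount s (((n : ℤ) - 5 * s) / 2) (n - 5 * s - ((n : ℤ) - 5 * s) / 2) = minValue n := by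
  unfold minValue corr4 blockCount triangleCount
  decide +kernel

lemma exists_balanced {n : ℕ} (hn : 5 ≤ n) :
    ∃ s : ℕ, 1 ≤ s ∧ 5 * s ≤ n ∧ n ≤ 13 * s + 9 ∧
      blockCount s (((n : ℤ) - 5 * s) / 2) (n - 5 * s - ((n : ℤ) - 5 * s) / 2) = minValue n := by
  obtain ⟨m, k, hm, hm5, rfl⟩ : ∃ m k, m < 113 ∧ 5 ≤ m ∧ n = m + 108 * k :=
    ⟨5 + (n - 5) % 108, (n - 5) / 108, by omega, by omega, by omega⟩
  obtain ⟨s, -, hs, hsm, hms, heq⟩ := exists_balanced_of_lt m hm hm5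
  refine ⟨s + 20 * k, by omega, by omega, by omega, ?_⟩
  rw [minValue_add_period, ← heq]
  have shift := blockCount_add_period s (((m : ℤ) - 5 * s) / 2)
    (m - 5 * s - ((m : ℤ) - 5 * s) / 2) k
  rw [show 5 * (s : ℤ) + ((m : ℤ) - 5 * s) / 2 + (m - 5 * s - ((m : ℤ) - 5 * s) / 2) = m by ring]
    at shift
  rw [← shift]
  push_cast
  congr 1 <;> omega

lemma genCount_eq_blockCount {n s t : ℕ} (hst : 5 * s ≤ t) (htn : t ≤ n) (hn : n ≤ 4 * (t + 1))
    (hnt : n - t ≤ 4 * (s + 1)) :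
    (genCount 4 n s t : ℤ) = blockCount s (n - t : ℕ) (t - 5 * s : ℕ) := by
  have card := card_blockPairs (k := 4) (by norm_num) (n := n) (s := s) (t := t) (by omega)
  have genCount_eq : genCount 4 n s t = #(blockPairs 4 n s t) :=
    (genCount_le_card_blockPairs (by norm_num) (by omega) hn).antisymm
      (card_blockPairs_le_genCount (by norm_num) (by omega) htn)
  have no_overlap : triangleCount 4 (n - t - 4 * s : ℕ) = 0 :=
    triangleCount_eq_zero (by positivity) (by omega)
  have last_empty : triangleCount 4 (n - t - 4 * t : ℕ) = 0 :=
    triangleCount_eq_zero (by positivity) (by omega)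
  simp only [Nat.cast_ofNat, no_overlap, last_empty, add_zero] at card
  rw [genCount_eq, card, blockCount, show t - s - 4 * s = t - 5 * s by omega]

lemma genCount_eq_zero {k n : ℕ} (hn : n ≤ k) (s t : ℕ) : genCount k n s t = 0 := by
  refine card_eq_zero.2 (filter_eq_empty_iff.2 fun p hp ↦ ?_)
  simp only [mem_product, mem_Icc] at hp
  have : k * 1 ≤ k * p.2 := Nat.mul_le_mul_left k hp.2.1
  omega

theorem exists_genCount_eq_minValue {n : ℕ} (hn : 1 ≤ n) :
    ∃ s t : ℕ, 1 ≤ s ∧ s ≤ t ∧ t ≤ n ∧ (genCount 4 n s t : ℤ) = minValue n := by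
  rcases le_or_gt n 4 with hn4 | hn4
  · refine ⟨1, n, le_rfl, hn, le_rfl, ?_⟩
    rw [genCount_eq_zero hn4]
    interval_cases n <;> decide
  · obtain ⟨s, hs, hsn, hns, heq⟩ := exists_balanced hn4
    refine ⟨s, n - (n - 5 * s) / 2, hs, by omega, by omega, ?_⟩
    rw [genCount_eq_blockCount (by omega) (by omega) (by omega) (by omega), ← heq]
    congr 1 <;> omega

end Attained

/-- For every `n ≥ 1`, the minimum over all block colorings `R^s B^(t-s) R^(n-t)`
(`1 ≤ s ≤ t ≤ n`) of the number of monochromatic triples `(x, y, x+4y)` equals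
`⌊(n² − 28n + 245)/216⌋ − c(n)`. -/
theorem min_genCount_four (n : ℕ) (hn : 1 ≤ n) :
    (∀ s t : ℕ, 1 ≤ s → s ≤ t → t ≤ n →
      ((n : ℤ) ^ 2 - 28 * n + 245) / 216 - corr4 n ≤ (genCount 4 n s t : ℤ)) ∧
    (∃ s t : ℕ, 1 ≤ s ∧ s ≤ t ∧ t ≤ n ∧
      (genCount 4 n s t : ℤ) = ((n : ℤ) ^ 2 - 28 * n + 245) / 216 - corr4 n) := by
  exact ⟨fun s t hs hst htn ↦ minValue_le_genCount hs hst htn, exists_genCount_eq_minValue hn⟩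
end

section
/- For every n ∈ ℕ with n ≥ 1, the minimal number of monochromatic generalized Schur triples of the form (x, y, x + ⌊y/2⌋) that can be attained under any 2-coloring of [n] of the block form R^s B^{t−s} R^{n−t} is M⁽¹ᐟ²⁾(n) = ⌊(15n² + 72)/76⌋ + c(n), where c(n) = 1 if n ≡ 18 (mod 38) or n ≡ 20 (mod 38), c(n) = −1 if n ≡ 19 (mod 38), and c(n) = 0 otherwise. -/
/-- The number `M⁽¹ᐟ²⁾(n,s,t)` of monochromatic generalized Schur triples
`(x, y, x + ⌊y/2⌋)` in `[n]³` under the block coloring `R^s B^(t-s) R^(n-t)`: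
pairs `(x,y) ∈ [n]²` such that `z = x + ⌊y/2⌋ ≤ n` and `x, y, z` are all red
(`≤ s` or `> t`) or all blue (in `(s,t]`). -/
def genCountHalf (n s t : ℕ) : ℕ :=
  ((Finset.Icc 1 n ×ˢ Finset.Icc 1 n).filter
    (fun p => p.1 + p.2 / 2 ≤ n ∧
      (((p.1 ≤ s ∨ t < p.1) ∧ (p.2 ≤ s ∨ t < p.2) ∧
        (p.1 + p.2 / 2 ≤ s ∨ t < p.1 + p.2 / 2)) ∨
       ((s < p.1 ∧ p.1 ≤ t) ∧ (s < p.2 ∧ p.2 ≤ t) ∧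
        (s < p.1 + p.2 / 2 ∧ p.1 + p.2 / 2 ≤ t))))).card

/-- The correction term for `a = 1/2`: `1` if `n ≡ 18` or `n ≡ 20 (mod 38)`,
`−1` if `n ≡ 19 (mod 38)`, and `0` otherwise. -/
def corrHalf (n : ℕ) : ℤ :=
  if n % 38 = 18 ∨ n % 38 = 20 then 1 else if n % 38 = 19 then -1 else 0

/-!
Write the coloring as `R^s B^m R^u` with `n = s + m + u`. For each `y` the admissible `x` form at
most three intervals, so summing over `y` gives the number of monochromatic triples as a
combination of clipped quarter-squares `⌊max(k, 0)²/4⌋`, plus an excess that is nonnegative and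
vanishes for `s ≤ m + 1`.

Around the minimum this combination is, up to parity terms, the quadratic form
`(60 n² + 19 (8m + 3s - 4n)² + (19s - 4n)²) / 304`. Shifting `(n, s, m)` by `(38, 8, 16)` changes
the form and the claimed minimum by the same amount, so only finitely many cases with small
squares have to be compared; rounding the real minimizer `s = 4n/19`, `m = (4n - 3s)/8` attains
the minimum.

Away from the minimum, where the clipped terms have other signs, four times the combination is at
least `(106/133) n² - 3`. Since `106/133 = 15/19 + 1/133`, this is after rounding at least four
times the claimed minimum once `n ≥ 31`, and smaller `n` are checked directly.
-/

/-- The quarter-square `⌊k²/4⌋` clipped to `0` for `k ≤ 0`. It is the closed form of the clipped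
sums `∑_{y ≤ N} max (⌊y/2⌋ - k) 0`, at `N - 2k`. -/
def clippedQuarterSq (k : ℤ) : ℤ := (max k 0) ^ 2 / 4

lemma four_mul_sq_ediv_four (k : ℤ) : 4 * (k ^ 2 / 4) = k ^ 2 - k % 2 := by
  obtain ⟨a, rfl | rfl⟩ := Int.even_or_odd' k
  · rw [show (2 * a) ^ 2 = 4 * a ^ 2 by ring]
    omega
  · rw [show (2 * a + 1) ^ 2 = 4 * (a ^ 2 + a) + 1 by ring]
    omega

lemma clippedQuarterSq_of_nonpos {k : ℤ} (hk : k ≤ 0) : clippedQuarterSq k = 0 := by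
  simp [clippedQuarterSq, hk]

lemma clippedQuarterSq_of_nonneg {k : ℤ} (hk : 0 ≤ k) : clippedQuarterSq k = k ^ 2 / 4 := by
  rw [clippedQuarterSq, max_eq_left hk]

lemma clippedQuarterSq_nonneg (k : ℤ) : 0 ≤ clippedQuarterSq k := by
  unfold clippedQuarterSq
  positivity

lemma four_mul_clippedQuarterSq_of_nonneg {k : ℤ} (hk : 0 ≤ k) :
    4 * clippedQuarterSq k = k ^ 2 - k % 2 := by
  rw [clippedQuarterSq_of_nonneg hk, four_mul_sq_ediv_four]

lemma four_mul_clippedQuarterSq_le (k : ℤ) : 4 * clippedQuarterSq k ≤ k ^ 2 := by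
  rcases le_total 0 k with hk | hk
  · have := four_mul_clippedQuarterSq_of_nonneg hk
    omega
  · rw [clippedQuarterSq_of_nonpos hk]
    positivity

lemma sq_sub_one_le_four_mul_clippedQuarterSq {k : ℤ} (hk : 0 ≤ k) :
    k ^ 2 - 1 ≤ 4 * clippedQuarterSq k := by
  have := four_mul_clippedQuarterSq_of_nonneg hk
  omega

/-- The tangent of the convex function `k ↦ (max k 0)²` at the rational point `c / p`, with the
denominators cleared and `1` allowed for rounding. -/
lemma tangent_le_clippedQuarterSq {p c : ℤ} (hp : 0 ≤ p) (hc : 0 ≤ c) (k : ℤ) :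
    2 * p * c * k - c ^ 2 - p ^ 2 ≤ 4 * p ^ 2 * clippedQuarterSq k := by
  rcases le_total 0 k with hk | hk
  · have hround := mul_le_mul_of_nonneg_left (sq_sub_one_le_four_mul_clippedQuarterSq hk)
      (sq_nonneg p)
    linarith [sq_nonneg (p * k - c)]
  · rw [clippedQuarterSq_of_nonpos hk]
    linarith [mul_nonneg (mul_nonneg hp hc) (neg_nonneg.2 hk), sq_nonneg c, sq_nonneg p]

lemma sum_half_sub (N k : ℕ) :
    ∑ y ∈ Finset.Ioc 0 N, ((y / 2 - k : ℕ) : ℤ) = clippedQuarterSq (N - 2 * k) := by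
  induction N with
  | zero => rw [clippedQuarterSq_of_nonpos (by omega)]; rfl
  | succ N ih =>
    rw [Finset.sum_Ioc_succ_top (Nat.zero_le N), ih]
    rcases le_or_gt (2 * k) N with hk | hk
    · have hN := four_mul_clippedQuarterSq_of_nonneg (k := (N : ℤ) - 2 * k) (by omega)
      have hN' := four_mul_clippedQuarterSq_of_nonneg (k := ((N + 1 : ℕ) : ℤ) - 2 * k) (by omega)
      have hsq : (((N + 1 : ℕ) : ℤ) - 2 * k) ^ 2 = (N - 2 * k) ^ 2 + 2 * (N - 2 * k) + 1 := by
        push_cast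
        ring
      omega
    · rw [clippedQuarterSq_of_nonpos (by omega), clippedQuarterSq_of_nonpos (by omega)]
      omega

lemma sum_sub_half (N k : ℕ) :
    ∑ y ∈ Finset.Ioc 0 N, ((k - y / 2 : ℕ) : ℤ) =
      N * k - clippedQuarterSq N + clippedQuarterSq (N - 2 * k) := by
  have hpoint (y : ℕ) : ((k - y / 2 : ℕ) : ℤ) =
      k - ((y / 2 - 0 : ℕ) : ℤ) + ((y / 2 - k : ℕ) : ℤ) := by omega
  simp only [hpoint, Finset.sum_add_distrib, Finset.sum_sub_distrib, sum_half_sub]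
  simp

/-- The first coordinates `x` of the monochromatic triples `(x, y, x + ⌊y/2⌋)` with a given `y`. -/
def monoFiber (n s t y : ℕ) : Finset ℕ :=
  (Finset.Icc 1 n).filter fun x => x + y / 2 ≤ n ∧
    (((x ≤ s ∨ t < x) ∧ (y ≤ s ∨ t < y) ∧ (x + y / 2 ≤ s ∨ t < x + y / 2)) ∨
      ((s < x ∧ x ≤ t) ∧ (s < y ∧ y ≤ t) ∧ (s < x + y / 2 ∧ x + y / 2 ≤ t)))

lemma genCountHalf_eq_sum_card_monoFiber (n s t : ℕ) :
    genCountHalf n s t = ∑ y ∈ Finset.Ioc 0 n, (monoFiber n s t y).card := by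
  simp only [genCountHalf, monoFiber, Finset.card_filter]
  exact Finset.sum_product_right _ _ _

lemma card_monoFiber_of_blue {s m y : ℕ} (u : ℕ) (hsy : s < y) (hyt : y ≤ s + m) :
    (monoFiber (s + m + u) s (s + m) y).card = m - y / 2 := by
  have hfiber : monoFiber (s + m + u) s (s + m) y = Finset.Ioc s (s + m - y / 2) := by
    ext x
    simp only [monoFiber, Finset.mem_filter, Finset.mem_Icc, Finset.mem_Ioc]
    omega
  rw [hfiber, Nat.card_Ioc]
  omega

lemma card_monoFiber_of_red {s m u y : ℕ} (hyn : y ≤ s + m + u) (hred : y ≤ s ∨ s + m < y) :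
    ((monoFiber (s + m + u) s (s + m) y).card : ℤ) =
      (s - y / 2 : ℕ) + (u - y / 2 : ℕ) + (y / 2 - m : ℕ) - (y / 2 - (s + m) : ℕ) -
        (y / 2 - (m + u) : ℕ) := by
  have hfiber : monoFiber (s + m + u) s (s + m) y =
      (Finset.Ioc 0 (s - y / 2)).disjUnion
        ((Finset.Ioc (s + m - y / 2) (min s (s + m + u - y / 2))).disjUnion
          (Finset.Ioc (s + m) (s + m + u - y / 2))
          (Finset.disjoint_left.2 fun x => by simp only [Finset.mem_Ioc]; omega))
        (Finset.disjoint_left.2 fun x => by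
          simp only [Finset.mem_disjUnion, Finset.mem_Ioc]; omega) := by
    ext x
    simp only [monoFiber, Finset.mem_filter, Finset.mem_disjUnion, Finset.mem_Icc, Finset.mem_Ioc]
    omega
  rw [hfiber, Finset.card_disjUnion, Finset.card_disjUnion]
  simp only [Nat.card_Ioc]
  omega

lemma sum_Ioc_eq_sub {a b : ℕ} (hab : a ≤ b) (f : ℕ → ℤ) :
    ∑ y ∈ Finset.Ioc a b, f y = ∑ y ∈ Finset.Ioc 0 b, f y - ∑ y ∈ Finset.Ioc 0 a, f y :=
  eq_sub_of_add_eq' (Finset.sum_Ioc_consecutive f (Nat.zero_le a) hab)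

/-- A closed form for the number of monochromatic triples under `R^s B^m R^u`, up to the
nonnegative excess in `genCountHalf_eq_blockBound_add`. -/
def blockBound (s m u : ℤ) : ℤ :=
  s ^ 2 + s * u + u ^ 2 + m ^ 2 - clippedQuarterSq s - clippedQuarterSq (s + m + u) +
    clippedQuarterSq (s - 2 * u) + clippedQuarterSq (s + m - u) - clippedQuarterSq (u - s - m) -
    clippedQuarterSq (s + m - 2 * u) + clippedQuarterSq (s + u - m) - clippedQuarterSq (s - m - u)

lemma genCountHalf_eq_sum_blocks (s m u : ℕ) :
    (genCountHalf (s + m + u) s (s + m) : ℤ) =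
      ∑ y ∈ Finset.Ioc 0 s, ((s - y / 2 : ℕ) + (u - y / 2 : ℕ) + (y / 2 - m : ℕ) : ℤ) +
      ∑ y ∈ Finset.Ioc s (s + m), ((m - y / 2 : ℕ) + (y / 2 - (m + u) : ℕ) : ℤ) +
      ∑ y ∈ Finset.Ioc (s + m) (s + m + u),
        ((s - y / 2 : ℕ) + (u - y / 2 : ℕ) + (y / 2 - m : ℕ) : ℤ) -
      ∑ y ∈ Finset.Ioc 0 (s + m + u), ((y / 2 - (s + m) : ℕ) + (y / 2 - (m + u) : ℕ) : ℤ) := by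
  rw [eq_sub_iff_add_eq, genCountHalf_eq_sum_card_monoFiber, Nat.cast_sum,
    ← Finset.sum_add_distrib,
    ← Finset.sum_Ioc_consecutive _ (Nat.zero_le (s + m)) (Nat.le_add_right (s + m) u),
    ← Finset.sum_Ioc_consecutive _ (Nat.zero_le s) (Nat.le_add_right s m)]
  refine congrArg₂ (· + ·) (congrArg₂ (· + ·) ?_ ?_) ?_ <;>
    refine Finset.sum_congr rfl fun y hy => ?_ <;> rw [Finset.mem_Ioc] at hy
  · rw [card_monoFiber_of_red (by omega) (by omega)]
    ring
  · rw [card_monoFiber_of_blue u hy.1 hy.2, Nat.sub_eq_zero_of_le (show y / 2 ≤ s + m by omega)]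
    simp
  · rw [card_monoFiber_of_red hy.2 (by omega)]
    ring

lemma genCountHalf_eq_blockBound_add (s m u : ℕ) :
    (genCountHalf (s + m + u) s (s + m) : ℤ) = blockBound s m u +
      ∑ y ∈ Finset.Ioc s (s + m), ((y / 2 - (m + u) : ℕ) : ℤ) +
      ∑ y ∈ Finset.Ioc (s + m) (s + m + u), ((s - y / 2 : ℕ) : ℤ) := by
  have hself : clippedQuarterSq ((s : ℤ) - 2 * s) = 0 := clippedQuarterSq_of_nonpos (by omega)
  rw [genCountHalf_eq_sum_blocks]
  simp only [Finset.sum_add_distrib, sum_Ioc_eq_sub (Nat.le_add_right s m),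
    sum_Ioc_eq_sub (Nat.le_add_right (s + m) u), sum_half_sub, sum_sub_half, blockBound]
  push_cast
  ring_nf at hself ⊢
  rw [hself]
  ring

lemma blockBound_le_genCountHalf (s m u : ℕ) :
    blockBound s m u ≤ genCountHalf (s + m + u) s (s + m) := by
  rw [genCountHalf_eq_blockBound_add, add_assoc, le_add_iff_nonneg_right]
  positivity

lemma genCountHalf_eq_blockBound {s m u : ℕ} (hsm : s ≤ m + 1) :
    (genCountHalf (s + m + u) s (s + m) : ℤ) = blockBound s m u := by
  have hmiddle : ∑ y ∈ Finset.Ioc s (s + m), ((y / 2 - (m + u) : ℕ) : ℤ) = 0 :=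
    Finset.sum_eq_zero fun y hy => by rw [Finset.mem_Ioc] at hy; omega
  have htail : ∑ y ∈ Finset.Ioc (s + m) (s + m + u), ((s - y / 2 : ℕ) : ℤ) = 0 :=
    Finset.sum_eq_zero fun y hy => by rw [Finset.mem_Ioc] at hy; omega
  rw [genCountHalf_eq_blockBound_add, hmiddle, htail, add_zero, add_zero]

/-- The value of the minimum, named so that its quasi-periodicity in `n` can be stated. -/
def minCount (n : ℕ) : ℤ := (15 * (n : ℤ) ^ 2 + 72) / 76 + corrHalf n

lemma minCount_le (n : ℕ) : 76 * minCount n ≤ 15 * (n : ℤ) ^ 2 + 148 := by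
  have hcorr : corrHalf n ≤ 1 := by
    unfold corrHalf
    split_ifs <;> norm_num
  unfold minCount
  omega

lemma minCount_add_period (k r : ℕ) :
    minCount (38 * k + r) = minCount r + 285 * k ^ 2 + 15 * k * r := by
  have hcorr : corrHalf (38 * k + r) = corrHalf r := by
    simp only [corrHalf, Nat.mul_add_mod]
  have hquad : 15 * ((38 * k + r : ℕ) : ℤ) ^ 2 + 72 =
      15 * (r : ℤ) ^ 2 + 72 + 76 * (285 * k ^ 2 + 15 * k * r) := by
    push_cast
    ring
  rw [minCount, minCount, hcorr, hquad, Int.add_mul_ediv_left _ _ (by norm_num)]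
  ring

/-- The quadratic (up to rounding) that `blockBound` becomes near the minimum, in terms of the
total length `n`, the length `s` of the first red block and the length `m` of the blue block. -/
def centralForm (n s m : ℤ) : ℤ :=
  s ^ 2 - s ^ 2 / 4 + (2 * m + s - n) ^ 2 - s * m + n ^ 2 / 4

/-- The region of block lengths `s`, `m`, `u` around the minimum on which no clipped term of
`blockBound` changes sign. -/
structure IsCentral (s m u : ℤ) : Prop where
  tail_le : u ≤ s + m
  le_two_mul_tail : s + m ≤ 2 * u
  middle_le : m ≤ s + u
  head_le : s ≤ m + u

lemma IsCentral.blockBound_eq {s m u : ℤ} (h : IsCentral s m u) :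
    blockBound s m u = centralForm (s + m + u) s m := by
  obtain ⟨hu, hsm, hm, hs⟩ := h
  have hparity₁ : (s + m - u) % 2 = (s + m + u) % 2 := by omega
  have hparity₂ : (s + u - m) % 2 = (s + m + u) % 2 := by omega
  have hquarter₁ := four_mul_clippedQuarterSq_of_nonneg (sub_nonneg.2 hu)
  have hquarter₂ := four_mul_clippedQuarterSq_of_nonneg (sub_nonneg.2 hm)
  have hquarter₃ := four_mul_sq_ediv_four (s + m + u)
  rw [blockBound, centralForm, clippedQuarterSq_of_nonneg (k := s) (by omega),
    clippedQuarterSq_of_nonneg (k := s + m + u) (by omega),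
    clippedQuarterSq_of_nonpos (k := s - 2 * u) (by omega),
    clippedQuarterSq_of_nonpos (k := u - s - m) (by omega),
    clippedQuarterSq_of_nonpos (k := s + m - 2 * u) (by omega),
    clippedQuarterSq_of_nonpos (k := s - m - u) (by omega)]
  linarith

lemma centralForm_add_period (k r s m : ℤ) :
    centralForm (38 * k + r) (s + 8 * k) (m + 16 * k) =
      centralForm r s m + 285 * k ^ 2 + 15 * k * r := by
  have hs : (s + 8 * k) ^ 2 / 4 = s ^ 2 / 4 + (4 * k * s + 16 * k ^ 2) := by
    rw [← Int.add_mul_ediv_left _ _ (by norm_num : (4 : ℤ) ≠ 0)]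
    ring_nf
  have hr : (38 * k + r) ^ 2 / 4 = r ^ 2 / 4 + (19 * k * r + 361 * k ^ 2) := by
    rw [← Int.add_mul_ediv_left _ _ (by norm_num : (4 : ℤ) ≠ 0)]
    ring_nf
  rw [centralForm, centralForm, hs, hr]
  ring

lemma centralForm_eq_add_sq (n s m : ℤ) :
    304 * centralForm n s m = 60 * n ^ 2 + 19 * (8 * m + 3 * s - 4 * n) ^ 2 +
      (19 * s - 4 * n) ^ 2 + 76 * (s % 2) - 76 * (n % 2) := by
  unfold centralForm
  linarith [four_mul_sq_ediv_four s, four_mul_sq_ediv_four n]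

set_option maxRecDepth 100000 in
lemma minCount_le_centralForm_of_lt_period :
    ∀ r : ℕ, r < 38 → ∀ s ∈ Finset.Icc (-1 : ℤ) 9, |19 * s - 4 * r| < 20 →
      ∀ m ∈ Finset.Icc (-4 : ℤ) 20, minCount r ≤ centralForm r s m := by
  decide +kernel

lemma minCount_le_centralForm_of_near {n : ℕ} {s m : ℤ} (hs : |19 * s - 4 * n| < 20)
    (hm : |8 * m + 3 * s - 4 * n| < 5) : minCount n ≤ centralForm n s m := by
  obtain ⟨k, r, hr, rfl⟩ : ∃ k r : ℕ, r < 38 ∧ n = 38 * k + r :=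
    ⟨n / 38, n % 38, Nat.mod_lt n (by norm_num), (Nat.div_add_mod n 38).symm⟩
  obtain ⟨s, rfl⟩ : ∃ s', s = s' + 8 * k := ⟨s - 8 * k, by ring⟩
  obtain ⟨m, rfl⟩ : ∃ m', m = m' + 16 * k := ⟨m - 16 * k, by ring⟩
  rw [abs_lt] at hs hm
  have hresidue : minCount r ≤ centralForm r s m :=
    minCount_le_centralForm_of_lt_period r hr s (Finset.mem_Icc.2 (by omega))
      (abs_lt.2 (by omega)) m (Finset.mem_Icc.2 (by omega))
  rw [minCount_add_period, Nat.cast_add, Nat.cast_mul, Nat.cast_ofNat, centralForm_add_period]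
  linarith

lemma minCount_le_centralForm (n : ℕ) (s m : ℤ) : minCount n ≤ centralForm n s m := by
  -- At `400` the two sides differ by more than `-1`: the parity terms lose at most `76`, and
  -- `304 * minCount n ≤ 60 * n ^ 2 + 592`.
  rcases lt_or_ge (19 * (8 * m + 3 * s - 4 * n) ^ 2 + (19 * s - 4 * n) ^ 2) 400 with hnear | hfar
  · exact minCount_le_centralForm_of_near
      (abs_lt_of_sq_lt_sq (by linarith [sq_nonneg (8 * m + 3 * s - 4 * n)]) (by norm_num))
      (abs_lt_of_sq_lt_sq (by linarith [sq_nonneg (19 * s - 4 * n)]) (by norm_num))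
  · have hsq := centralForm_eq_add_sq n s m
    have hle := minCount_le n
    omega

lemma minCount_le_blockBound_of_add_lt : ∀ s < 31, ∀ m < 31 - s, ∀ u < 31 - s - m,
    minCount (s + m + u) ≤ blockBound s m u := by
  decide +kernel

section NotCentral

variable {s m u : ℤ}

lemma sq_le_blockBound_of_add_le_tail (hs : 0 ≤ s) (hm : 0 ≤ m) (hu : s + m ≤ u) :
    106 * (s + m + u) ^ 2 ≤ 133 * (4 * blockBound s m u + 3) := by
  have hd : 0 ≤ u - s - m := by omega
  rw [blockBound, clippedQuarterSq_of_nonpos (k := s + m - 2 * u) (by omega),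
    clippedQuarterSq_of_nonpos (k := s - m - u) (by omega)]
  linarith [four_mul_clippedQuarterSq_le s, four_mul_clippedQuarterSq_le (s + m + u),
    four_mul_clippedQuarterSq_le (u - s - m), clippedQuarterSq_nonneg (s - 2 * u),
    clippedQuarterSq_nonneg (s + m - u),
    sq_sub_one_le_four_mul_clippedQuarterSq (k := s + u - m) (by omega),
    sq_nonneg s, sq_nonneg m, sq_nonneg (u - s - m), sq_nonneg (2 * s - m),
    mul_nonneg hs hd, mul_nonneg hm hd]

lemma sq_le_blockBound_of_add_le_head (hm : 0 ≤ m) (hu : 0 ≤ u) (hs : m + u ≤ s) :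
    106 * (s + m + u) ^ 2 ≤ 133 * (4 * blockBound s m u + 3) := by
  have hd : 0 ≤ s - m - u := by omega
  rw [blockBound, clippedQuarterSq_of_nonpos (k := u - s - m) (by omega)]
  linarith [four_mul_clippedQuarterSq_le s, four_mul_clippedQuarterSq_le (s + m + u),
    four_mul_clippedQuarterSq_le (s + m - 2 * u), four_mul_clippedQuarterSq_le (s - m - u),
    tangent_le_clippedQuarterSq zero_le_one hm (s - 2 * u),
    sq_sub_one_le_four_mul_clippedQuarterSq (k := s + m - u) (by omega),
    sq_sub_one_le_four_mul_clippedQuarterSq (k := s + u - m) (by omega),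
    sq_nonneg m, sq_nonneg u, sq_nonneg (s - m - u), sq_nonneg (2 * u - m),
    mul_nonneg hm hd, mul_nonneg hu hd]

lemma sq_le_blockBound_of_add_le_middle (hs : 0 ≤ s) (hm : s + u ≤ m) (hsm : s + m ≤ 2 * u) :
    106 * (s + m + u) ^ 2 ≤ 133 * (4 * blockBound s m u + 3) := by
  have hd : 0 ≤ m - s - u := by omega
  have he : 0 ≤ 2 * u - s - m := by omega
  rw [blockBound, clippedQuarterSq_of_nonpos (k := u - s - m) (by omega),
    clippedQuarterSq_of_nonpos (k := s + m - 2 * u) (by omega),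
    clippedQuarterSq_of_nonpos (k := s - m - u) (by omega)]
  linarith [four_mul_clippedQuarterSq_le s, four_mul_clippedQuarterSq_le (s + m + u),
    clippedQuarterSq_nonneg (s - 2 * u), clippedQuarterSq_nonneg (s + u - m),
    sq_sub_one_le_four_mul_clippedQuarterSq (k := s + m - u) (by omega),
    sq_nonneg s, sq_nonneg (m - s - u), sq_nonneg (2 * u - s - m),
    mul_nonneg hs hd, mul_nonneg hs he, mul_nonneg he hd]

-- With `(s + m - 2 * u) / 8` as the point of tangency, one bound for the term at `s - 2 * u`
-- serves for both of its signs, here and in the next lemma.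
lemma sq_le_blockBound_of_add_le_middle_of_two_mul_tail_le (hu : 0 ≤ u) (hm : s + u ≤ m)
    (hsm : 2 * u ≤ s + m) : 106 * (s + m + u) ^ 2 ≤ 133 * (4 * blockBound s m u + 3) := by
  have hd : 0 ≤ m - s - u := by omega
  have he : 0 ≤ s + m - 2 * u := by omega
  rw [blockBound, clippedQuarterSq_of_nonpos (k := u - s - m) (by omega),
    clippedQuarterSq_of_nonpos (k := s - m - u) (by omega)]
  linarith [four_mul_clippedQuarterSq_le s, four_mul_clippedQuarterSq_le (s + m + u),
    four_mul_clippedQuarterSq_le (s + m - 2 * u),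
    tangent_le_clippedQuarterSq (p := 8) (by norm_num) he (s - 2 * u),
    clippedQuarterSq_nonneg (s + u - m),
    sq_sub_one_le_four_mul_clippedQuarterSq (k := s + m - u) (by omega),
    sq_nonneg u, sq_nonneg (m - s - u), sq_nonneg (s + m - 2 * u),
    mul_nonneg hu hd, mul_nonneg hu he, mul_nonneg he hd]

lemma sq_le_blockBound_of_two_mul_tail_le (hs : s ≤ m + u) (hm : m ≤ s + u)
    (hsm : 2 * u ≤ s + m) : 106 * (s + m + u) ^ 2 ≤ 133 * (4 * blockBound s m u + 3) := by
  have hc : 0 ≤ m + u - s := by omega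
  have hd : 0 ≤ s + u - m := by omega
  have he : 0 ≤ s + m - 2 * u := by omega
  rw [blockBound, clippedQuarterSq_of_nonpos (k := u - s - m) (by omega),
    clippedQuarterSq_of_nonpos (k := s - m - u) (by omega)]
  linarith [four_mul_clippedQuarterSq_le s, four_mul_clippedQuarterSq_le (s + m + u),
    four_mul_clippedQuarterSq_le (s + m - 2 * u),
    tangent_le_clippedQuarterSq (p := 8) (by norm_num) he (s - 2 * u),
    sq_sub_one_le_four_mul_clippedQuarterSq (k := s + m - u) (by omega),
    sq_sub_one_le_four_mul_clippedQuarterSq hd,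
    sq_nonneg (m + u - s), sq_nonneg (s + u - m), sq_nonneg (s + m - 2 * u),
    mul_nonneg he hd, mul_nonneg he hc, mul_nonneg hd hc, sq_nonneg (5 * s - 6 * m + 4 * u)]

lemma sq_le_blockBound_of_not_isCentral (hs : 0 ≤ s) (hm : 0 ≤ m) (hu : 0 ≤ u)
    (hcentral : ¬ IsCentral s m u) :
    106 * (s + m + u) ^ 2 ≤ 133 * (4 * blockBound s m u + 3) := by
  rcases le_total (s + m) u with htail | htail
  · exact sq_le_blockBound_of_add_le_tail hs hm htail
  rcases le_total (m + u) s with hhead | hhead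
  · exact sq_le_blockBound_of_add_le_head hm hu hhead
  rcases le_total (s + u) m with hmiddle | hmiddle
  · rcases le_total (s + m) (2 * u) with hsm | hsm
    · exact sq_le_blockBound_of_add_le_middle hs hmiddle hsm
    · exact sq_le_blockBound_of_add_le_middle_of_two_mul_tail_le hu hmiddle hsm
  · have hsm : ¬ s + m ≤ 2 * u := fun hsm => hcentral ⟨htail, hsm, hmiddle, hhead⟩
    exact sq_le_blockBound_of_two_mul_tail_le hhead hmiddle (le_of_not_ge hsm)

end NotCentral

lemma minCount_le_blockBound (s m u : ℕ) : minCount (s + m + u) ≤ blockBound s m u := by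
  rcases lt_or_ge (s + m + u) 31 with hsmall | hlarge
  · exact minCount_le_blockBound_of_add_lt s (by omega) m (by omega) u (by omega)
  by_cases hcentral : IsCentral s m u
  · rw [hcentral.blockBound_eq]
    exact_mod_cast minCount_le_centralForm (s + m + u) s m
  · have hle := minCount_le (s + m + u)
    have hquad := sq_le_blockBound_of_not_isCentral (Int.natCast_nonneg s)
      (Int.natCast_nonneg m) (Int.natCast_nonneg u) hcentral
    have hsq : (31 : ℤ) ^ 2 ≤ (s + m + u) ^ 2 := pow_le_pow_left₀ (by norm_num) (by omega) 2
    push_cast at hle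
    omega

lemma minCount_le_genCountHalf {n s t : ℕ} (hst : s ≤ t) (htn : t ≤ n) :
    minCount n ≤ genCountHalf n s t := by
  obtain ⟨m, rfl⟩ := Nat.exists_eq_add_of_le hst
  obtain ⟨u, rfl⟩ := Nat.exists_eq_add_of_le htn
  exact (minCount_le_blockBound s m u).trans (blockBound_le_genCountHalf s m u)

/-- The length of the first red block of an optimal coloring: the minimizer `4n/19` of
`centralForm_eq_add_sq`, rounded. -/
def optimalHead (n : ℕ) : ℕ := (4 * n + 8) / 19

/-- The length of the blue block of an optimal coloring: the minimizer `(4n - 3s)/8` of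
`centralForm_eq_add_sq` for `s = optimalHead n`, rounded. -/
def optimalMiddle (n : ℕ) : ℕ := (4 * n + 3 - 3 * optimalHead n) / 8

lemma centralForm_optimal (n : ℕ) :
    centralForm n (optimalHead n) (optimalMiddle n) = minCount n := by
  have hperiod : ∀ r : ℕ, r < 38 →
      centralForm r (optimalHead r) (optimalMiddle r) = minCount r := by
    decide +kernel
  obtain ⟨k, r, hr, rfl⟩ : ∃ k r : ℕ, r < 38 ∧ n = 38 * k + r :=
    ⟨n / 38, n % 38, Nat.mod_lt n (by norm_num), (Nat.div_add_mod n 38).symm⟩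
  have hhead : optimalHead (38 * k + r) = optimalHead r + 8 * k := by
    unfold optimalHead
    omega
  have hmiddle : optimalMiddle (38 * k + r) = optimalMiddle r + 16 * k := by
    rw [optimalMiddle, hhead]
    unfold optimalMiddle optimalHead
    omega
  rw [hhead, hmiddle, minCount_add_period, ← hperiod r hr]
  push_cast
  exact centralForm_add_period k r _ _

lemma optimalHead_pos {n : ℕ} (hn : 3 ≤ n) : 0 < optimalHead n := by
  unfold optimalHead
  omega

lemma optimalHead_le_optimalMiddle_add_one (n : ℕ) : optimalHead n ≤ optimalMiddle n + 1 := by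
  unfold optimalMiddle optimalHead
  omega

lemma optimalHead_add_optimalMiddle_le (n : ℕ) : optimalHead n + optimalMiddle n ≤ n := by
  unfold optimalMiddle optimalHead
  omega

lemma three_mul_optimal_le {n : ℕ} (hn : 5 ≤ n) :
    3 * (optimalHead n + optimalMiddle n) ≤ 2 * n := by
  rcases lt_or_ge n 19 with hsmall | hlarge
  · interval_cases n <;> decide
  · unfold optimalMiddle optimalHead
    omega

lemma isCentral_optimal {n : ℕ} (hn : 5 ≤ n) :
    IsCentral (optimalHead n) (optimalMiddle n) (n - optimalHead n - optimalMiddle n) := by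
  have hthree := three_mul_optimal_le hn
  have hhead : optimalHead n = (4 * n + 8) / 19 := rfl
  have hmiddle : optimalMiddle n = (4 * n + 3 - 3 * optimalHead n) / 8 := rfl
  constructor <;> omega

lemma genCountHalf_optimal {n : ℕ} (hn : 5 ≤ n) :
    (genCountHalf n (optimalHead n) (optimalHead n + optimalMiddle n) : ℤ) = minCount n := by
  have hcentral := isCentral_optimal hn
  obtain ⟨u, hu⟩ := Nat.exists_eq_add_of_le (optimalHead_add_optimalMiddle_le n)
  have hu' : (n : ℤ) - optimalHead n - optimalMiddle n = u := by omega
  rw [hu'] at hcentral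
  calc (genCountHalf n (optimalHead n) (optimalHead n + optimalMiddle n) : ℤ)
      = blockBound (optimalHead n) (optimalMiddle n) u := by
        rw [← genCountHalf_eq_blockBound (optimalHead_le_optimalMiddle_add_one n), ← hu]
    _ = centralForm n (optimalHead n) (optimalMiddle n) := by
        rw [hcentral.blockBound_eq, ← Nat.cast_add, ← Nat.cast_add, ← hu]
    _ = minCount n := centralForm_optimal n

lemma exists_genCountHalf_eq_minCount {n : ℕ} (hn : 1 ≤ n) :
    ∃ s t : ℕ, 1 ≤ s ∧ s ≤ t ∧ t ≤ n ∧ (genCountHalf n s t : ℤ) = minCount n := by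
  rcases lt_or_ge n 5 with hsmall | hlarge
  · interval_cases n
    exacts [⟨1, 1, by decide⟩, ⟨1, 2, by decide⟩, ⟨1, 2, by decide⟩, ⟨1, 3, by decide⟩]
  · exact ⟨optimalHead n, optimalHead n + optimalMiddle n, optimalHead_pos (by omega),
      Nat.le_add_right _ _, optimalHead_add_optimalMiddle_le n, genCountHalf_optimal hlarge⟩

/-- For every `n ≥ 1`, the minimum over all block colorings `R^s B^(t-s) R^(n-t)`
(`1 ≤ s ≤ t ≤ n`) of the number of monochromatic triples `(x, y, x + ⌊y/2⌋)`
equals `⌊(15n² + 72)/76⌋ + c(n)`. -/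
theorem min_genCount_half (n : ℕ) (hn : 1 ≤ n) :
    (∀ s t : ℕ, 1 ≤ s → s ≤ t → t ≤ n →
      (15 * (n : ℤ) ^ 2 + 72) / 76 + corrHalf n ≤ (genCountHalf n s t : ℤ)) ∧
    (∃ s t : ℕ, 1 ≤ s ∧ s ≤ t ∧ t ≤ n ∧
      (genCountHalf n s t : ℤ) = (15 * (n : ℤ) ^ 2 + 72) / 76 + corrHalf n) :=
  ⟨fun _ _ _ hst htn => minCount_le_genCountHalf hst htn, exists_genCountHalf_eq_minCount hn⟩
end
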